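/- arXiv:math/0404169 — 2 statements merged into one kernel-verified Lean document; each statement's English description precedes it below -/
import Mathlib

section
/- For general points, if 2d ≥ 11n and n ≥ 1, then ℓ(L(d, d−1, 6^n)) = 2d − 11n. Since v(L(d, d−1, 6^n)) = 2d − 21n, this system is special. -/
open MvPolynomial

/-- The iterated partial derivative corresponding to the multi-index `ν`. -/
noncomputable def mderiv (ν : Fin 3 → ℕ) :
    MvPolynomial (Fin 3) ℂ →ₗ[ℂ] MvPolynomial (Fin 3) ℂ :=
  ((pderiv (R := ℂ) (0 : Fin 3)).toLinearMap ^ ν 0) ∘ₗ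
  ((pderiv (R := ℂ) (1 : Fin 3)).toLinearMap ^ ν 1) ∘ₗ
  ((pderiv (R := ℂ) (2 : Fin 3)).toLinearMap ^ ν 2)

/-- The linear system `L(d; m)` of homogeneous forms of degree `d` in three variables
all of whose partial derivatives of order `< m i` vanish at the point `p i`,
i.e. plane curves of degree `d` with multiplicity at least `m i` at `p i`. -/
noncomputable def linSys {k : ℕ} (p : Fin k → Fin 3 → ℂ) (d : ℕ) (m : Fin k → ℕ) :
    Submodule ℂ (MvPolynomial (Fin 3) ℂ) :=
  (homogeneousSubmodule (Fin 3) ℂ d) ⊓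
    ⨅ (i : Fin k), ⨅ (ν : Fin 3 → ℕ), ⨅ (_ : ν 0 + ν 1 + ν 2 < m i),
      LinearMap.ker ((aeval (p i)).toLinearMap ∘ₗ mderiv ν)

/-- The projective dimension `ℓ` of the linear system (`-1` means empty). -/
noncomputable def projDim {k : ℕ} (p : Fin k → Fin 3 → ℂ) (d : ℕ) (m : Fin k → ℕ) : ℤ :=
  (Module.finrank ℂ (linSys p d m) : ℤ) - 1

/-- The virtual dimension `v = d(d+3)/2 - ∑ mᵢ(mᵢ+1)/2`. -/
def virtDim {k : ℕ} (d : ℕ) (m : Fin k → ℕ) : ℤ :=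
  ((d : ℤ) * (d + 3)) / 2 - ∑ i : Fin k, ((m i : ℤ) * (m i + 1)) / 2

/-- The quasi-homogeneous multiplicity vector `(m₀, 6, …, 6)` on `n + 1` points. -/
def qh (n m0 : ℕ) : Fin (n + 1) → ℕ := fun i => if i = 0 then m0 else 6

/-- A property `Q` of configurations of `k` points of `ℙ²` (given by nonzero homogeneous
coordinate vectors) holds for points in general position: there is a nonzero polynomial
in the coordinates such that `Q` holds whenever it does not vanish. -/
def Generically (k : ℕ) (Q : (Fin k → Fin 3 → ℂ) → Prop) : Prop :=
  ∃ P : MvPolynomial (Fin k × Fin 3) ℂ, P ≠ 0 ∧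
    ∀ p : Fin k → Fin 3 → ℂ, (∀ i, p i ≠ 0) →
      eval (fun x => p x.1 x.2) P ≠ 0 → Q p

section Multiplicity

/-- `F` has multiplicity at least `m` at `p`. -/
def HasMult (F : MvPolynomial (Fin 3) ℂ) (p : Fin 3 → ℂ) (m : ℕ) : Prop :=
  ∀ ν : Fin 3 → ℕ, ν 0 + ν 1 + ν 2 < m → aeval p (mderiv ν F) = 0

lemma mem_linSys {k : ℕ} {p : Fin k → Fin 3 → ℂ} {d : ℕ} {m : Fin k → ℕ}
    {F : MvPolynomial (Fin 3) ℂ} :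
    F ∈ linSys p d m ↔ F.IsHomogeneous d ∧ ∀ i, HasMult F (p i) (m i) := by
  simp [linSys, HasMult, Submodule.mem_iInf, mem_homogeneousSubmodule]

lemma mderiv_apply (ν : Fin 3 → ℕ) (F : MvPolynomial (Fin 3) ℂ) :
    mderiv ν F = (pderiv 0)^[ν 0] ((pderiv 1)^[ν 1] ((pderiv 2)^[ν 2] F)) := by
  simp [mderiv, Module.End.pow_apply]

lemma coeff_iterate_pderiv (i : Fin 3) (k : ℕ) (m : Fin 3 →₀ ℕ) :
    ∃ c : ℂ, c ≠ 0 ∧ ∀ F : MvPolynomial (Fin 3) ℂ,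
      coeff m ((pderiv i)^[k] F) = c * coeff (m + Finsupp.single i k) F := by
  induction k generalizing m with
  | zero => exact ⟨1, one_ne_zero, fun F => by simp⟩
  | succ k ih =>
    obtain ⟨c, hc, h⟩ := ih (m + Finsupp.single i 1)
    refine ⟨c * ((m i : ℂ) + 1), mul_ne_zero hc (Nat.cast_add_one_ne_zero _), fun F => ?_⟩
    rw [Function.iterate_succ_apply', coeff_pderiv, h, add_assoc, ← Finsupp.single_add,
      add_comm 1 k]
    ring

lemma coeff_mderiv (ν : Fin 3 → ℕ) (m : Fin 3 →₀ ℕ) :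
    ∃ c : ℂ, c ≠ 0 ∧ ∀ F : MvPolynomial (Fin 3) ℂ,
      coeff m (mderiv ν F) = c * coeff (m + Finsupp.equivFunOnFinite.symm ν) F := by
  obtain ⟨c0, h0, H0⟩ := coeff_iterate_pderiv 0 (ν 0) m
  obtain ⟨c1, h1, H1⟩ := coeff_iterate_pderiv 1 (ν 1) (m + Finsupp.single 0 (ν 0))
  obtain ⟨c2, h2, H2⟩ := coeff_iterate_pderiv 2 (ν 2)
    (m + Finsupp.single 0 (ν 0) + Finsupp.single 1 (ν 1))
  refine ⟨c0 * c1 * c2, by positivity, fun F => ?_⟩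
  have hν : m + Finsupp.single 0 (ν 0) + Finsupp.single 1 (ν 1) + Finsupp.single 2 (ν 2)
      = m + Finsupp.equivFunOnFinite.symm ν := by
    ext i
    fin_cases i <;> simp
  rw [mderiv_apply, H0, H1, H2, hν]
  ring

/-- Translation of the variables by `p`. -/
noncomputable def shiftVars (p : Fin 3 → ℂ) :
    MvPolynomial (Fin 3) ℂ →ₐ[ℂ] MvPolynomial (Fin 3) ℂ :=
  aeval fun i => X i + C (p i)

lemma pderiv_shiftVars (p : Fin 3 → ℂ) (i : Fin 3) (F : MvPolynomial (Fin 3) ℂ) :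
    pderiv i (shiftVars p F) = shiftVars p (pderiv i F) := by
  induction F using MvPolynomial.induction_on with
  | C a => simp [shiftVars, MvPolynomial.algebraMap_eq]
  | add f g hf hg => simp [hf, hg]
  | mul_X f j hf =>
    simp only [map_mul, Derivation.leibniz, hf, smul_eq_mul, map_add]
    simp only [shiftVars, aeval_X, map_add, pderiv_C, pderiv_X, add_zero]
    by_cases h : j = i
    · subst h; simp
    · simp [h]

lemma mderiv_shiftVars (p : Fin 3 → ℂ) (ν : Fin 3 → ℕ) (F : MvPolynomial (Fin 3) ℂ) :
    mderiv ν (shiftVars p F) = shiftVars p (mderiv ν F) := by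
  have h (i : Fin 3) (k : ℕ) (G : MvPolynomial (Fin 3) ℂ) :
      (pderiv i)^[k] (shiftVars p G) = shiftVars p ((pderiv i)^[k] G) :=
    (Function.Semiconj.iterate_right (f := shiftVars p) (ga := pderiv i) (gb := pderiv i)
      (fun G => (pderiv_shiftVars p i G).symm) k G).symm
  simp only [mderiv_apply, h]

lemma coeff_zero_shiftVars (p : Fin 3 → ℂ) (F : MvPolynomial (Fin 3) ℂ) :
    coeff 0 (shiftVars p F) = aeval p F := by
  rw [← constantCoeff_eq]
  induction F using MvPolynomial.induction_on with
  | C a => simp [shiftVars, MvPolynomial.algebraMap_eq]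
  | add f g hf hg => simp [hf, hg]
  | mul_X f j hf => rw [map_mul, map_mul, hf]; simp [shiftVars]

lemma hasMult_iff_coeff (F : MvPolynomial (Fin 3) ℂ) (p : Fin 3 → ℂ) (m : ℕ) :
    HasMult F p m ↔ ∀ s : Fin 3 →₀ ℕ, s.degree < m → coeff s (shiftVars p F) = 0 := by
  have key (ν : Fin 3 → ℕ) : aeval p (mderiv ν F) = 0 ↔
      coeff (Finsupp.equivFunOnFinite.symm ν) (shiftVars p F) = 0 := by
    obtain ⟨c, hc, h⟩ := coeff_mderiv ν 0
    rw [← coeff_zero_shiftVars, ← mderiv_shiftVars, h, zero_add]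
    simp [hc]
  constructor
  · intro h s hs
    have := (key s).1 (h s (by rwa [Finsupp.degree_eq_sum, Fin.sum_univ_three] at hs))
    simpa using this
  · intro h ν hν
    refine (key ν).2 (h _ ?_)
    rw [Finsupp.degree_eq_sum, Fin.sum_univ_three]
    simpa using hν

/-- Restriction to the parametrized line `T ↦ p + T v`. -/
noncomputable def lineRestrict (p v : Fin 3 → ℂ) :
    MvPolynomial (Fin 3) ℂ →ₐ[ℂ] Polynomial ℂ :=
  aeval fun i => Polynomial.C (p i) + Polynomial.C (v i) * Polynomial.X

lemma lineRestrict_shiftVars (p v : Fin 3 → ℂ) (F : MvPolynomial (Fin 3) ℂ) :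
    lineRestrict 0 v (shiftVars p F) = lineRestrict p v F := by
  have : (lineRestrict 0 v).comp (shiftVars p) = lineRestrict p v := by
    ext i : 1
    simp [lineRestrict, shiftVars, add_comm]
  exact DFunLike.congr_fun this F

lemma coeff_lineRestrict_zero (v : Fin 3 → ℂ) (F : MvPolynomial (Fin 3) ℂ) (k : ℕ) :
    (lineRestrict 0 v F).coeff k = eval v (homogeneousComponent k F) := by
  induction F using MvPolynomial.induction_on' with
  | monomial s a =>
    have h1 : homogeneousComponent k (monomial s a) = if s.degree = k then monomial s a else 0 := by
      rw [homogeneousComponent_of_mem (m := k) (n := s.degree) (isHomogeneous_monomial a rfl)]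
      simp [eq_comm]
    have h2 : lineRestrict 0 v (monomial s a) =
        Polynomial.C (eval v (monomial s a)) * Polynomial.X ^ s.degree := by
      simp [lineRestrict, aeval_monomial, eval_monomial, Finsupp.prod_fintype, mul_pow,
        Finset.prod_mul_distrib, Finsupp.degree_eq_sum, Finset.prod_pow_eq_pow_sum, mul_assoc]
    rw [h1, h2, Polynomial.coeff_C_mul_X_pow]
    by_cases h : s.degree = k
    · simp [h]
    · simp [h, Ne.symm h]
  | add f g hf hg => simp [hf, hg]

lemma hasMult_iff_lineRestrict (F : MvPolynomial (Fin 3) ℂ) (p : Fin 3 → ℂ) (m : ℕ) :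
    HasMult F p m ↔ ∀ v, Polynomial.X ^ m ∣ lineRestrict p v F := by
  simp only [hasMult_iff_coeff, Polynomial.X_pow_dvd_iff, ← lineRestrict_shiftVars p,
    coeff_lineRestrict_zero]
  constructor
  · intro h v k hk
    have : homogeneousComponent k (shiftVars p F) = 0 := by
      ext s
      rw [coeff_homogeneousComponent, coeff_zero]
      split_ifs with hs
      · exact h s (hs ▸ hk)
      · rfl
    simp [this]
  · intro h s hs
    have : homogeneousComponent s.degree (shiftVars p F) = 0 :=
      MvPolynomial.funext fun v => by simpa using h v _ hs
    simpa [coeff_homogeneousComponent] using congrArg (coeff s) this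

end Multiplicity

section LinearChange

/-- The linear change of variables given by a matrix. -/
noncomputable def linSubst (A : Matrix (Fin 3) (Fin 3) ℂ) :
    MvPolynomial (Fin 3) ℂ →ₐ[ℂ] MvPolynomial (Fin 3) ℂ :=
  aeval fun i => ∑ j, C (A i j) * X j

lemma lineRestrict_linSubst (A : Matrix (Fin 3) (Fin 3) ℂ) (p v : Fin 3 → ℂ)
    (F : MvPolynomial (Fin 3) ℂ) :
    lineRestrict p v (linSubst A F) = lineRestrict (A.mulVec p) (A.mulVec v) F := by
  have : (lineRestrict p v).comp (linSubst A) = lineRestrict (A.mulVec p) (A.mulVec v) := by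
    ext i : 1
    simp only [AlgHom.comp_apply, linSubst, lineRestrict, aeval_X, map_sum, map_mul, algHom_C,
      Polynomial.algebraMap_eq, Matrix.mulVec, dotProduct, Finset.sum_mul, mul_add,
      Finset.sum_add_distrib, mul_assoc]
  exact DFunLike.congr_fun this F

lemma HasMult.linSubst {A : Matrix (Fin 3) (Fin 3) ℂ} {p : Fin 3 → ℂ} {m : ℕ}
    {F : MvPolynomial (Fin 3) ℂ} (h : HasMult F (A.mulVec p) m) :
    HasMult (linSubst A F) p m := by
  rw [hasMult_iff_lineRestrict] at h ⊢
  intro v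
  rw [lineRestrict_linSubst]
  exact h _

lemma linSubst_linSubst (A B : Matrix (Fin 3) (Fin 3) ℂ) :
    (linSubst A).comp (linSubst B) = linSubst (B * A) := by
  ext i : 1
  simp only [AlgHom.comp_apply, linSubst, aeval_X, map_sum, map_mul, algHom_C,
    MvPolynomial.algebraMap_eq, Matrix.mul_apply, Finset.mul_sum, Finset.sum_mul]
  rw [Finset.sum_comm]
  simp only [mul_assoc]

lemma linSubst_one : linSubst 1 = AlgHom.id ℂ _ := by
  ext i : 1
  simp [linSubst, Matrix.one_apply]

lemma isHomogeneous_linSubst (A : Matrix (Fin 3) (Fin 3) ℂ) {F : MvPolynomial (Fin 3) ℂ} {d : ℕ}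
    (h : F.IsHomogeneous d) : (linSubst A F).IsHomogeneous d := by
  have := h.aeval (fun i => ∑ j, C (A i j) * X j) (n := 1) fun i =>
    IsHomogeneous.sum _ _ _ fun j _ => by
      simpa using (isHomogeneous_C (Fin 3) (A i j)).mul (isHomogeneous_X ℂ j)
  rwa [one_mul] at this

lemma linSubst_mem_linSys {A : Matrix (Fin 3) (Fin 3) ℂ} {k : ℕ} {p : Fin k → Fin 3 → ℂ} {d : ℕ}
    {m : Fin k → ℕ} {F : MvPolynomial (Fin 3) ℂ} (h : F ∈ linSys (fun i => A.mulVec (p i)) d m) :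
    linSubst A F ∈ linSys p d m := by
  rw [mem_linSys] at h ⊢
  exact ⟨isHomogeneous_linSubst A h.1, fun i => (h.2 i).linSubst⟩

lemma finrank_linSys_mulVec {A : Matrix (Fin 3) (Fin 3) ℂ} (hA : IsUnit A.det) {k : ℕ}
    (p : Fin k → Fin 3 → ℂ) (d : ℕ) (m : Fin k → ℕ) :
    Module.finrank ℂ (linSys (fun i => A.mulVec (p i)) d m) =
      Module.finrank ℂ (linSys p d m) := by
  have h1 := Matrix.mul_nonsing_inv A hA
  have h2 := Matrix.nonsing_inv_mul A hA
  let e : MvPolynomial (Fin 3) ℂ ≃ₐ[ℂ] MvPolynomial (Fin 3) ℂ :=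
    AlgEquiv.ofAlgHom (linSubst A) (linSubst A⁻¹)
      (by rw [linSubst_linSubst, h2, linSubst_one]) (by rw [linSubst_linSubst, h1, linSubst_one])
  have hmap : (linSys (fun i => A.mulVec (p i)) d m).map (e.toLinearEquiv : _ →ₗ[ℂ] _) =
      linSys p d m := by
    ext F
    simp only [Submodule.mem_map]
    constructor
    · rintro ⟨G, hG, rfl⟩
      exact linSubst_mem_linSys hG
    · intro hF
      refine ⟨linSubst A⁻¹ F, linSubst_mem_linSys ?_, e.apply_symm_apply F⟩
      simpa [Matrix.mulVec_mulVec, h2] using hF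
  rw [← hmap]
  exact (LinearEquiv.finrank_map_eq e.toLinearEquiv _).symm

end LinearChange

section MonoidalForms

open Polynomial (homogenize degreeLT)

lemma eval_lineRestrict (p v : Fin 3 → ℂ) (F : MvPolynomial (Fin 3) ℂ) (t : ℂ) :
    (lineRestrict p v F).eval t = eval (fun i => p i + v i * t) F := by
  induction F using MvPolynomial.induction_on with
  | C a => simp [Polynomial.algebraMap_eq]
  | add f g hf hg => simp [hf, hg]
  | mul_X f j hf =>
    rw [map_mul, Polynomial.eval_mul, hf, map_mul]
    simp [lineRestrict]

/-- The binary form of degree `k` in the first two variables with dehomogenization `a`. -/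
noncomputable def binForm (k : ℕ) : Polynomial ℂ →ₗ[ℂ] MvPolynomial (Fin 3) ℂ :=
  (rename Fin.castSucc).toLinearMap ∘ₗ Polynomial.homogenizeLM k

lemma binForm_apply (k : ℕ) (a : Polynomial ℂ) :
    binForm k a = rename Fin.castSucc (homogenize a k) := rfl

lemma isHomogeneous_binForm (k : ℕ) (a : Polynomial ℂ) : (binForm k a).IsHomogeneous k :=
  (Polynomial.isHomogeneous_homogenize a).rename_isHomogeneous

lemma binForm_mul {k l : ℕ} {a b : Polynomial ℂ} (ha : a.natDegree ≤ k) (hb : b.natDegree ≤ l) :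
    binForm (k + l) (a * b) = binForm k a * binForm l b := by
  simp only [binForm_apply, Polynomial.homogenize_mul a b ha hb, map_mul]

lemma binForm_pow {k : ℕ} {a : Polynomial ℂ} (ha : a.natDegree ≤ k) (j : ℕ) :
    binForm (j * k) (a ^ j) = binForm k a ^ j := by
  have := Polynomial.homogenize_finsetProd (s := Finset.range j) (p := fun _ => a)
    (n := fun _ => k) fun _ _ => ha
  simp only [Finset.prod_const, Finset.card_range, Finset.sum_const, smul_eq_mul] at this
  rw [binForm_apply, this, map_pow, binForm_apply]

lemma eval_binForm {k : ℕ} {a : Polynomial ℂ} (ha : a.natDegree ≤ k) (w : Fin 3 → ℂ)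
    (hw : w 1 ≠ 0) : eval w (binForm k a) = a.eval (w 0 / w 1) * w 1 ^ k := by
  rw [binForm_apply, eval_rename, Polynomial.eval_homogenize ha _ (by simpa using hw)]
  simp

lemma X_pow_dvd_lineRestrict_binForm {p : Fin 3 → ℂ} (h0 : p 0 = 0) (h1 : p 1 = 0)
    (v : Fin 3 → ℂ) (k : ℕ) (a : Polynomial ℂ) :
    Polynomial.X ^ k ∣ lineRestrict p v (binForm k a) := by
  rw [binForm_apply, Polynomial.homogenize, map_sum, map_sum]
  refine Finset.dvd_sum fun x hx => ?_
  rw [Finset.HasAntidiagonal.mem_antidiagonal] at hx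
  have : lineRestrict p v (rename Fin.castSucc
      (monomial (Finsupp.update (Finsupp.single (0 : Fin 2) x.1) 1 x.2) (a.coeff x.1))) =
      Polynomial.C (a.coeff x.1) * Polynomial.C (v 0) ^ x.1 * Polynomial.C (v 1) ^ x.2 *
        Polynomial.X ^ k := by
    rw [← hx, lineRestrict, aeval_rename, aeval_monomial, Finsupp.prod_fintype _ _ (by simp)]
    simp [Fin.prod_univ_two, h0, h1, Polynomial.algebraMap_eq]
    ring
  rw [this]
  exact dvd_mul_left _ _

/-- The form `Z A + B` of degree `k + 1`, where the binary forms `A` and `B` have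
dehomogenizations `a` and `b`. -/
noncomputable def monoidForm (k : ℕ) :
    Polynomial ℂ × Polynomial ℂ →ₗ[ℂ] MvPolynomial (Fin 3) ℂ :=
  LinearMap.coprod (LinearMap.mulLeft ℂ (X 2) ∘ₗ binForm k) (binForm (k + 1))

lemma monoidForm_apply (k : ℕ) (a b : Polynomial ℂ) :
    monoidForm k (a, b) = X 2 * binForm k a + binForm (k + 1) b := by
  simp [monoidForm]

lemma isHomogeneous_monoidForm (k : ℕ) (a b : Polynomial ℂ) :
    (monoidForm k (a, b)).IsHomogeneous (k + 1) := by
  rw [monoidForm_apply]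
  refine IsHomogeneous.add ?_ (isHomogeneous_binForm _ _)
  rw [add_comm k]
  exact (isHomogeneous_X ℂ 2).mul (isHomogeneous_binForm _ _)

lemma eval_monoidForm {k : ℕ} {a b : Polynomial ℂ} (ha : a.natDegree ≤ k)
    (hb : b.natDegree ≤ k + 1) (w : Fin 3 → ℂ) (hw : w 1 ≠ 0) :
    eval w (monoidForm k (a, b)) =
      (b.eval (w 0 / w 1) + w 2 / w 1 * a.eval (w 0 / w 1)) * w 1 ^ (k + 1) := by
  rw [monoidForm_apply, map_add, map_mul, eval_X, eval_binForm ha w hw, eval_binForm hb w hw]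
  field_simp
  ring

lemma monoidForm_mul {k l : ℕ} {D a b : Polynomial ℂ} (hD : D.natDegree ≤ l)
    (ha : a.natDegree ≤ k) (hb : b.natDegree ≤ k + 1) :
    monoidForm (l + k) (D * a, D * b) = binForm l D * monoidForm k (a, b) := by
  rw [monoidForm_apply, monoidForm_apply, binForm_mul hD ha, add_assoc, binForm_mul hD hb]
  ring

lemma monoidForm_injOn {k : ℕ} {a b : Polynomial ℂ} (ha : a.natDegree ≤ k)
    (hb : b.natDegree ≤ k + 1) (h : monoidForm k (a, b) = 0) : a = 0 ∧ b = 0 := by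
  have key (t s : ℂ) : b.eval t + s * a.eval t = 0 := by
    have := eval_monoidForm ha hb ![t, 1, s] (by simp)
    rw [h] at this
    simpa using this.symm
  constructor <;> refine Polynomial.funext fun t => ?_
  · have h0 := key t 0
    have h1 := key t 1
    simp only [Polynomial.eval_zero]
    linear_combination h1 - h0
  · simpa using key t 0

lemma hasMult_monoidForm_vertex {p : Fin 3 → ℂ} (h0 : p 0 = 0) (h1 : p 1 = 0) (k : ℕ)
    (a b : Polynomial ℂ) : HasMult (monoidForm k (a, b)) p k := by
  rw [hasMult_iff_lineRestrict]
  intro v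
  rw [monoidForm_apply, map_add, map_mul]
  exact dvd_add ((X_pow_dvd_lineRestrict_binForm h0 h1 v k a).mul_left _)
    ((pow_dvd_pow _ k.le_succ).trans (X_pow_dvd_lineRestrict_binForm h0 h1 v (k + 1) b))

lemma MvPolynomial.IsHomogeneous.iterate_pderiv {F : MvPolynomial (Fin 3) ℂ} {d : ℕ} (h : F.IsHomogeneous d)
    (i : Fin 3) (k : ℕ) : ((pderiv i)^[k] F).IsHomogeneous (d - k) := by
  induction k with
  | zero => simpa using h
  | succ k ih =>
    rw [Function.iterate_succ_apply', ← Nat.sub_sub]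
    exact ih.pderiv

lemma eval_vertex {p : Fin 3 → ℂ} (h0 : p 0 = 0) (h1 : p 1 = 0) {G : MvPolynomial (Fin 3) ℂ}
    {d : ℕ} (hG : G.IsHomogeneous d) :
    eval p G = coeff (Finsupp.single 2 d) G * p 2 ^ d := by
  rw [eval_eq']
  rw [Finset.sum_eq_single (Finsupp.single 2 d)]
  · simp [Fin.prod_univ_three]
  · intro s hs hne
    have hd : s.degree = d := by
      rw [Finsupp.degree_eq_weight_one]
      exact hG (mem_support_iff.1 hs)
    have : s 0 ≠ 0 ∨ s 1 ≠ 0 := by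
      by_contra! hc
      apply hne
      rw [Finsupp.degree_eq_sum, Fin.sum_univ_three] at hd
      ext i
      fin_cases i <;> simp [hc.1, hc.2]
      omega
    rcases this with h | h <;> simp [Fin.prod_univ_three, h0, h1, h]
  · intro h
    simp [notMem_support_iff.1 h]

lemma coeff_eq_zero_of_hasMult_vertex {p : Fin 3 → ℂ} (h0 : p 0 = 0) (h1 : p 1 = 0)
    (h2 : p 2 ≠ 0) {F : MvPolynomial (Fin 3) ℂ} {d k : ℕ} (hF : F.IsHomogeneous d)
    (hm : HasMult F p k) {s : Fin 3 →₀ ℕ} (hs : s.degree = d) (hlt : s 0 + s 1 < k) :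
    coeff s F = 0 := by
  have h := hm ![s 0, s 1, 0] (by simpa using hlt)
  rw [Finsupp.degree_eq_sum, Fin.sum_univ_three] at hs
  have hh : (mderiv ![s 0, s 1, 0] F).IsHomogeneous (d - 0 - s 1 - s 0) := by
    rw [mderiv_apply]
    exact ((hF.iterate_pderiv 2 _).iterate_pderiv 1 _).iterate_pderiv 0 _
  obtain ⟨c, hc, hco⟩ := coeff_mderiv ![s 0, s 1, 0] (Finsupp.single 2 (d - 0 - s 1 - s 0))
  have hs' : Finsupp.single 2 (d - 0 - s 1 - s 0) +
      Finsupp.equivFunOnFinite.symm ![s 0, s 1, 0] = s := by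
    ext i
    fin_cases i <;> simp
    omega
  rw [aeval_eq_eval, eval_vertex h0 h1 hh, hco, hs'] at h
  simpa [hc, h2] using h

lemma mem_degreeLT_succ {k : ℕ} {a : Polynomial ℂ} :
    a ∈ degreeLT ℂ (k + 1) ↔ a.natDegree ≤ k := by
  rw [Polynomial.mem_degreeLT, Polynomial.degree_lt_iff_coeff_zero,
    Polynomial.natDegree_le_iff_coeff_eq_zero]
  rfl

lemma rename_castSucc_monomial (i j : ℕ) (c : ℂ) :
    rename Fin.castSucc (monomial (Finsupp.update (Finsupp.single (0 : Fin 2) i) 1 j) c) =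
      C c * X 0 ^ i * X (1 : Fin 3) ^ j := by
  rw [rename_eq_aeval, aeval_monomial, Finsupp.prod_fintype _ _ (by simp)]
  simp [Fin.prod_univ_two, mul_assoc, MvPolynomial.algebraMap_eq]

lemma exists_eq_monoidForm {p : Fin 3 → ℂ} (h0 : p 0 = 0) (h1 : p 1 = 0) (h2 : p 2 ≠ 0)
    {F : MvPolynomial (Fin 3) ℂ} {k : ℕ} (hF : F.IsHomogeneous (k + 1)) (hm : HasMult F p k) :
    ∃ a b : Polynomial ℂ, a.natDegree ≤ k ∧ b.natDegree ≤ k + 1 ∧ F = monoidForm k (a, b) := by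
  suffices F ∈ ((degreeLT ℂ (k + 1)).prod (degreeLT ℂ (k + 2))).map (monoidForm k) by
    obtain ⟨⟨a, b⟩, ⟨ha, hb⟩, rfl⟩ := this
    exact ⟨a, b, mem_degreeLT_succ.1 ha, mem_degreeLT_succ.1 hb, rfl⟩
  rw [F.as_sum]
  refine Submodule.sum_mem _ fun s hs => ?_
  have hd : s.degree = k + 1 := by
    rw [Finsupp.degree_eq_weight_one]
    exact hF (mem_support_iff.1 hs)
  have hk : k ≤ s 0 + s 1 := by
    by_contra! hlt
    exact mem_support_iff.1 hs (coeff_eq_zero_of_hasMult_vertex h0 h1 h2 hF hm hd hlt)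
  rw [Finsupp.degree_eq_sum, Fin.sum_univ_three] at hd
  have hmon : monomial s (coeff s F) = C (coeff s F) * X 0 ^ s 0 * X 1 ^ s 1 * X 2 ^ s 2 := by
    rw [monomial_eq, Finsupp.prod_fintype _ _ (by simp), Fin.prod_univ_three]
    ring
  rw [hmon, Submodule.mem_map]
  obtain hs2 | hs2 : s 2 = 0 ∨ s 2 = 1 := by omega
  · refine ⟨(0, Polynomial.monomial (s 0) (coeff s F)), ⟨by simp, mem_degreeLT_succ.2
      ((Polynomial.natDegree_monomial_le _).trans (by omega))⟩, ?_⟩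
    rw [monoidForm_apply, binForm_apply _ (Polynomial.monomial _ _),
      Polynomial.homogenize_monomial (by omega), rename_castSucc_monomial, hs2,
      show k + 1 - s 0 = s 1 by omega]
    simp
  · refine ⟨(Polynomial.monomial (s 0) (coeff s F), 0), ⟨mem_degreeLT_succ.2
      ((Polynomial.natDegree_monomial_le _).trans (by omega)), by simp⟩, ?_⟩
    rw [monoidForm_apply, binForm_apply _ (Polynomial.monomial _ _),
      Polynomial.homogenize_monomial (by omega), rename_castSucc_monomial, hs2,
      show k - s 0 = s 1 by omega]
    simp only [map_zero, add_zero, pow_one]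
    ring

/-- Local form at `t` of a polynomial whose pullback along an affine map with value `t` at `0`
is divisible by a power of the variable. -/
lemma X_sub_C_pow_dvd_of_X_pow_dvd_comp {a : Polynomial ℂ} {t u : ℂ} (hu : u ≠ 0) {m : ℕ}
    (h : Polynomial.X ^ m ∣ a.comp (Polynomial.C t + Polynomial.C u * Polynomial.X)) :
    (Polynomial.X - Polynomial.C t) ^ m ∣ a := by
  obtain ⟨q, hq⟩ := h
  have hL : (Polynomial.C t + Polynomial.C u * Polynomial.X).comp
      (Polynomial.C u⁻¹ * (Polynomial.X - Polynomial.C t)) = Polynomial.X := by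
    simp only [Polynomial.add_comp, Polynomial.C_comp, Polynomial.mul_comp, Polynomial.X_comp,
      ← mul_assoc, ← Polynomial.C_mul, mul_inv_cancel₀ hu, Polynomial.C_1]
    ring
  have := congrArg
    (fun f => Polynomial.comp f (Polynomial.C u⁻¹ * (Polynomial.X - Polynomial.C t))) hq
  simp only [Polynomial.comp_assoc, hL, Polynomial.comp_X, Polynomial.mul_comp,
    Polynomial.pow_comp, Polynomial.X_comp, mul_pow] at this
  rw [this, mul_comm (Polynomial.C u⁻¹ ^ m), mul_assoc]
  exact dvd_mul_right _ _

lemma dvd_of_hasMult_monoidForm {p : Fin 3 → ℂ} (hp : p 1 ≠ 0) {k m : ℕ} {a b : Polynomial ℂ}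
    (ha : a.natDegree ≤ k) (hb : b.natDegree ≤ k + 1)
    (h : HasMult (monoidForm k (a, b)) p (m + 1)) :
    (Polynomial.X - Polynomial.C (p 0 / p 1)) ^ m ∣ a ∧
      (Polynomial.X - Polynomial.C (p 0 / p 1)) ^ (m + 1) ∣
        b + Polynomial.C (p 2 / p 1) * a := by
  rw [hasMult_iff_lineRestrict] at h
  set L : Polynomial ℂ :=
    Polynomial.C (p 0 / p 1) + Polynomial.C (p 1)⁻¹ * Polynomial.X with hL
  have hline (w : ℂ) : lineRestrict p ![1, 0, w] (monoidForm k (a, b)) =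
      Polynomial.C (p 1 ^ (k + 1)) * (b + Polynomial.C (p 2 / p 1) * a).comp L +
        Polynomial.X * (Polynomial.C (w * p 1 ^ k) * a.comp L) := by
    refine Polynomial.funext fun t => ?_
    rw [eval_lineRestrict, eval_monoidForm ha hb _ (by simpa using hp)]
    have : (p 0 + t) / p 1 = p 0 / p 1 + (p 1)⁻¹ * t := by field_simp
    simp only [Matrix.cons_val_zero, Matrix.cons_val_one, Matrix.cons_val, one_mul, zero_mul,
      add_zero, Polynomial.eval_add, Polynomial.eval_mul, Polynomial.eval_C, Polynomial.eval_X,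
      Polynomial.eval_comp, hL, this]
    field_simp
    ring
  have h0 := h ![1, 0, 0]
  have h1 := dvd_sub (h ![1, 0, 1]) h0
  rw [hline] at h0 h1
  rw [hline, zero_mul, Polynomial.C_0, zero_mul, mul_zero, add_zero, add_sub_cancel_left,
    pow_succ', one_mul] at h1
  rw [zero_mul, Polynomial.C_0, zero_mul, mul_zero, add_zero] at h0
  have hu (j : ℕ) : IsUnit (Polynomial.C (p 1 ^ j)) :=
    Polynomial.isUnit_C.2 (pow_ne_zero _ hp).isUnit
  exact ⟨X_sub_C_pow_dvd_of_X_pow_dvd_comp (inv_ne_zero hp)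
      ((hu _).dvd_mul_left.1 ((mul_dvd_mul_iff_left Polynomial.X_ne_zero).1 h1)),
    X_sub_C_pow_dvd_of_X_pow_dvd_comp (inv_ne_zero hp) ((hu _).dvd_mul_left.1 h0)⟩

lemma X_dvd_lineRestrict {p : Fin 3 → ℂ} {F : MvPolynomial (Fin 3) ℂ} (h : eval p F = 0)
    (v : Fin 3 → ℂ) : Polynomial.X ∣ lineRestrict p v F := by
  rw [Polynomial.X_dvd_iff, Polynomial.coeff_zero_eq_eval_zero, eval_lineRestrict]
  simpa using h

end MonoidalForms

section Dimension

open Polynomial (degreeLT)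

/-- Evaluation of `b + s a` at the points `t i`, with `s` the vector `s i`. -/
noncomputable def residualEval {n : ℕ} (e : ℕ) (t s : Fin n → ℂ) :
    degreeLT ℂ (e + 1) × degreeLT ℂ (e + 2) →ₗ[ℂ] (Fin n → ℂ) :=
  LinearMap.pi fun i =>
    LinearMap.coprod (s i • (Polynomial.leval (t i)).domRestrict (degreeLT ℂ (e + 1)))
      ((Polynomial.leval (t i)).domRestrict (degreeLT ℂ (e + 2)))

lemma residualEval_apply {n : ℕ} (e : ℕ) (t s : Fin n → ℂ)
    (ab : degreeLT ℂ (e + 1) × degreeLT ℂ (e + 2)) (i : Fin n) :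
    residualEval e t s ab i = s i * (ab.1 : Polynomial ℂ).eval (t i) +
      (ab.2 : Polynomial ℂ).eval (t i) := by
  simp [residualEval]

instance finite_degreeLT (k : ℕ) : Module.Finite ℂ (degreeLT ℂ k) :=
  Module.Finite.equiv (Polynomial.degreeLTEquiv ℂ k).symm

lemma finrank_degreeLT (k : ℕ) : Module.finrank ℂ (degreeLT ℂ k) = k := by
  rw [(Polynomial.degreeLTEquiv ℂ k).finrank_eq]
  simp

lemma finrank_ker_residualEval {n e : ℕ} {t s : Fin n → ℂ}
    (h : Function.Surjective (residualEval e t s)) :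
    n + Module.finrank ℂ (LinearMap.ker (residualEval e t s)) = 2 * e + 3 := by
  have := LinearMap.finrank_range_add_finrank_ker (residualEval e t s)
  rw [LinearMap.range_eq_top.2 h, finrank_top, Module.finrank_prod, finrank_degreeLT,
    finrank_degreeLT, Module.finrank_fin_fun] at this
  omega

/-- The product of the fifth powers of the lines `X - t i Y`, dehomogenized. -/
noncomputable def lineProd {n : ℕ} (t : Fin n → ℂ) : Polynomial ℂ :=
  ∏ i, (Polynomial.X - Polynomial.C (t i)) ^ 5

lemma monic_lineProd {n : ℕ} (t : Fin n → ℂ) : (lineProd t).Monic :=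
  Polynomial.monic_prod_of_monic _ _ fun _ _ => (Polynomial.monic_X_sub_C _).pow 5

lemma natDegree_lineProd {n : ℕ} (t : Fin n → ℂ) : (lineProd t).natDegree = 5 * n := by
  rw [lineProd, Polynomial.natDegree_prod_of_monic _ _
    fun _ _ => (Polynomial.monic_X_sub_C _).pow 5]
  simp [mul_comm]

lemma lineProd_dvd {n : ℕ} {t : Fin n → ℂ} (ht : Function.Injective t) {a : Polynomial ℂ}
    (h : ∀ i, (Polynomial.X - Polynomial.C (t i)) ^ 5 ∣ a) : lineProd t ∣ a :=
  Finset.prod_dvd_of_coprime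
    (fun _ _ _ _ hij => (Polynomial.pairwise_coprime_X_sub_C ht hij).pow) fun i _ => h i

lemma X_pow_dvd_lineRestrict_lineProd {n : ℕ} {p : Fin 3 → ℂ} (hp : p 1 ≠ 0) (t : Fin n → ℂ)
    {i : Fin n} (hi : t i = p 0 / p 1) (v : Fin 3 → ℂ) :
    Polynomial.X ^ 5 ∣ lineRestrict p v (binForm (5 * n) (lineProd t)) := by
  have hprod : binForm (5 * n) (lineProd t) =
      ∏ i, binForm 1 (Polynomial.X - Polynomial.C (t i)) ^ 5 := by
    have := Polynomial.homogenize_finsetProd (s := Finset.univ)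
      (p := fun i => (Polynomial.X - Polynomial.C (t i)) ^ 5) (n := fun _ => 5) fun _ _ => by simp
    simp only [Finset.sum_const, Finset.card_univ, Fintype.card_fin, smul_eq_mul] at this
    rw [binForm_apply, lineProd, mul_comm, this, map_prod]
    exact Finset.prod_congr rfl fun i _ => binForm_pow (k := 1) (by simp) 5
  rw [hprod, map_prod]
  refine dvd_trans ?_ (Finset.dvd_prod_of_mem _ (Finset.mem_univ i))
  rw [map_pow]
  refine pow_dvd_pow_of_dvd (X_dvd_lineRestrict ?_ v) 5
  rw [eval_binForm (by simp) p hp]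
  simp [hi]

/-- The factor of `b + s a` at a simple point, once the lines have been removed. -/
lemma eval_eq_zero_of_pow_dvd_lineProd_mul {n : ℕ} {t : Fin n → ℂ} (ht : Function.Injective t)
    {i : Fin n} {q : Polynomial ℂ}
    (h : (Polynomial.X - Polynomial.C (t i)) ^ 6 ∣ lineProd t * q) : q.eval (t i) = 0 := by
  rw [lineProd, ← Finset.mul_prod_erase _ _ (Finset.mem_univ i), mul_assoc, pow_succ _ 5,
    mul_dvd_mul_iff_left (pow_ne_zero 5 (Polynomial.X_sub_C_ne_zero _)),
    Polynomial.dvd_iff_isRoot, Polynomial.IsRoot, Polynomial.eval_mul, mul_eq_zero] at h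
  refine h.resolve_left ?_
  rw [Polynomial.eval_prod]
  refine Finset.prod_ne_zero_iff.2 fun j hj => ?_
  simpa [sub_eq_zero] using fun hc => (Finset.ne_of_mem_erase hj) (ht hc).symm

lemma finrank_linSys_of_surjective {n e : ℕ} {p : Fin (n + 1) → Fin 3 → ℂ}
    (h0 : p 0 0 = 0) (h1 : p 0 1 = 0) (h2 : p 0 2 ≠ 0) (hp : ∀ i : Fin n, p i.succ 1 ≠ 0)
    (ht : Function.Injective fun i : Fin n => p i.succ 0 / p i.succ 1)
    (hs : Function.Surjective (residualEval e (fun i : Fin n => p i.succ 0 / p i.succ 1)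
      fun i => p i.succ 2 / p i.succ 1)) :
    n + Module.finrank ℂ (linSys p (5 * n + e + 1) (qh n (5 * n + e))) = 2 * e + 3 := by
  rw [← finrank_ker_residualEval hs]
  congr 1
  set t : Fin n → ℂ := fun i => p i.succ 0 / p i.succ 1 with htdef
  set s : Fin n → ℂ := fun i => p i.succ 2 / p i.succ 1 with hsdef
  set D := lineProd t with hD
  have hDdeg : D.natDegree = 5 * n := natDegree_lineProd t
  have hD0 : D ≠ 0 := (monic_lineProd t).ne_zero
  let Ψ : LinearMap.ker (residualEval e t s) →ₗ[ℂ] MvPolynomial (Fin 3) ℂ :=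
    LinearMap.mulLeft ℂ (binForm (5 * n) D) ∘ₗ monoidForm e ∘ₗ
      ((degreeLT ℂ (e + 1)).subtype.prodMap (degreeLT ℂ (e + 2)).subtype) ∘ₗ
        (LinearMap.ker (residualEval e t s)).subtype
  have hΨ (x : LinearMap.ker (residualEval e t s)) :
      Ψ x = binForm (5 * n) D * monoidForm e (x.1.1, x.1.2) := rfl
  have hbin : binForm (5 * n) D ≠ 0 := by
    intro h
    refine hD0 (Polynomial.eq_zero_of_homogenize_eq_zero hDdeg.le ?_)
    exact rename_injective _ (Fin.castSucc_injective 2) (by simpa [binForm_apply] using h)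
  have hinj : Function.Injective Ψ := by
    rw [injective_iff_map_eq_zero]
    rintro ⟨⟨a, b⟩, hx⟩ h
    rw [hΨ, mul_eq_zero, or_iff_right hbin] at h
    obtain ⟨ha, hb⟩ := monoidForm_injOn (mem_degreeLT_succ.1 a.2) (mem_degreeLT_succ.1 b.2) h
    ext1
    exact Prod.ext (Subtype.ext ha) (Subtype.ext hb)
  rw [← LinearMap.finrank_range_of_inj hinj]
  suffices linSys p (5 * n + e + 1) (qh n (5 * n + e)) = LinearMap.range Ψ by rw [this]
  ext F
  rw [mem_linSys, LinearMap.mem_range]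
  constructor
  · rintro ⟨hF, hm⟩
    obtain ⟨a, b, ha, hb, rfl⟩ := exists_eq_monoidForm h0 h1 h2 hF (hm 0)
    have hdvd (i : Fin n) := dvd_of_hasMult_monoidForm (m := 5) (hp i) ha hb (hm i.succ)
    obtain ⟨a, rfl⟩ := lineProd_dvd ht fun i => (hdvd i).1
    obtain ⟨b, rfl⟩ := lineProd_dvd ht (a := b) fun i => by
      rw [← dvd_add_left ((hdvd i).1.mul_left _)]
      exact (pow_dvd_pow _ (Nat.le_succ 5)).trans (hdvd i).2
    change (D * a).natDegree ≤ _ at ha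
    change (D * b).natDegree ≤ _ at hb
    replace ha : a.natDegree ≤ e := by
      rcases eq_or_ne a 0 with rfl | h
      · simp
      · rw [Polynomial.natDegree_mul hD0 h] at ha
        omega
    replace hb : b.natDegree ≤ e + 1 := by
      rcases eq_or_ne b 0 with rfl | h
      · simp
      · rw [Polynomial.natDegree_mul hD0 h] at hb
        omega
    refine ⟨⟨(⟨a, mem_degreeLT_succ.2 ha⟩, ⟨b, mem_degreeLT_succ.2 hb⟩), ?_⟩, ?_⟩
    · rw [LinearMap.mem_ker]
      ext i
      rw [residualEval_apply]
      have h6 := (hdvd i).2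
      rw [mul_left_comm, ← mul_add] at h6
      have := eval_eq_zero_of_pow_dvd_lineProd_mul ht h6
      rw [Polynomial.eval_add, Polynomial.eval_mul, Polynomial.eval_C] at this
      rw [add_comm]
      exact this
    · rw [hΨ, ← monoidForm_mul hDdeg.le ha hb]
  · rintro ⟨⟨⟨a, b⟩, hx⟩, rfl⟩
    rw [hΨ]
    have ha := mem_degreeLT_succ.1 a.2
    have hb := mem_degreeLT_succ.1 b.2
    refine ⟨(isHomogeneous_binForm _ _).mul (isHomogeneous_monoidForm _ _ _), fun i => ?_⟩
    refine Fin.cases ?_ (fun i => ?_) i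
    · rw [← monoidForm_mul hDdeg.le ha hb]
      exact hasMult_monoidForm_vertex h0 h1 _ _ _
    · rw [qh, if_neg (Fin.succ_ne_zero i), hasMult_iff_lineRestrict]
      intro v
      rw [map_mul, pow_succ _ 5]
      refine mul_dvd_mul (X_pow_dvd_lineRestrict_lineProd (hp i) t rfl v)
        (X_dvd_lineRestrict ?_ v)
      have hi := congrFun (LinearMap.mem_ker.1 hx) i
      rw [residualEval_apply, add_comm] at hi
      rw [eval_monoidForm ha hb _ (hp i)]
      exact mul_eq_zero_of_left hi _

end Dimension

section GeneralPosition

/-- The matrix whose `i`-th row lists the values at `(x i, y i, z i)` of the first `n` of the forms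
`X ^ j Y ^ (e + 1 - j)` (`j ≤ e`) and `Z X ^ j Y ^ (e - j)`. -/
def valueMatrix {R : Type*} [CommRing R] {n : ℕ} (e : ℕ) (x y z : Fin n → R) :
    Matrix (Fin n) (Fin n) R :=
  Matrix.of fun i j =>
    if (j : ℕ) < e + 1 then x i ^ (j : ℕ) * y i ^ (e + 1 - j)
    else z i * x i ^ (j - (e + 1) : ℕ) * y i ^ (e - (j - (e + 1)))

lemma valueMatrix_map {R S : Type*} [CommRing R] [CommRing S] {n : ℕ} (e : ℕ) (f : R →+* S)
    (x y z : Fin n → R) :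
    f.mapMatrix (valueMatrix e x y z) =
      valueMatrix e (fun i => f (x i)) (fun i => f (y i)) fun i => f (z i) := by
  ext i j
  simp only [valueMatrix, RingHom.mapMatrix_apply, Matrix.map_apply, Matrix.of_apply]
  split_ifs <;> simp

lemma valueMatrix_eq_vandermonde {R : Type*} [CommRing R] {n : ℕ} (e : ℕ) (x : Fin n → R) :
    valueMatrix e x 1 (fun i => x i ^ (e + 1)) = Matrix.vandermonde x := by
  ext i j
  simp only [valueMatrix, Matrix.of_apply, Matrix.vandermonde_apply, Pi.one_apply, one_pow,
    mul_one]
  split_ifs with h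
  · rfl
  · rw [← pow_add]
    congr 1
    omega

lemma residualEval_surjective {n e : ℕ} {x y z : Fin n → ℂ} (hn : n ≤ 2 * (e + 1))
    (hy : ∀ i, y i ≠ 0) (hdet : (valueMatrix e x y z).det ≠ 0) :
    Function.Surjective (residualEval e (fun i => x i / y i) fun i => z i / y i) := by
  intro w
  set M := valueMatrix e x y z with hM
  set c : Fin n → ℂ := M⁻¹.mulVec fun i => y i ^ (e + 1) * w i with hc
  have hMc : M.mulVec c = fun i => y i ^ (e + 1) * w i := by
    rw [hc, Matrix.mulVec_mulVec, Matrix.mul_nonsing_inv _ (isUnit_iff_ne_zero.2 hdet),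
      Matrix.one_mulVec]
  have ha : ∑ j : Fin n, (if (j : ℕ) < e + 1 then (0 : Polynomial ℂ) else
      Polynomial.monomial (j - (e + 1) : ℕ) (c j)) ∈ Polynomial.degreeLT ℂ (e + 1) := by
    refine Submodule.sum_mem _ fun j _ => ?_
    split_ifs with h
    · exact zero_mem _
    · exact mem_degreeLT_succ.2 ((Polynomial.natDegree_monomial_le _).trans (by omega))
  have hb : ∑ j : Fin n, (if (j : ℕ) < e + 1 then Polynomial.monomial (j : ℕ) (c j) else 0) ∈
      Polynomial.degreeLT ℂ (e + 2) := by
    refine Submodule.sum_mem _ fun j _ => ?_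
    split_ifs with h
    · exact mem_degreeLT_succ.2 ((Polynomial.natDegree_monomial_le _).trans (by omega))
    · exact zero_mem _
  refine ⟨(⟨_, ha⟩, ⟨_, hb⟩), ?_⟩
  ext i
  have hi := congrFun hMc i
  refine mul_left_cancel₀ (pow_ne_zero (e + 1) (hy i)) (Eq.trans ?_ hi)
  rw [residualEval_apply, Matrix.mulVec, dotProduct, Polynomial.eval_finsetSum,
    Polynomial.eval_finsetSum, Finset.mul_sum, ← Finset.sum_add_distrib, Finset.mul_sum]
  refine Finset.sum_congr rfl fun j _ => ?_
  have hyi := hy i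
  simp only [hM, valueMatrix, Matrix.of_apply]
  split_ifs with h
  · obtain ⟨r, hr⟩ := Nat.exists_eq_add_of_le h.le
    rw [hr, Nat.add_sub_cancel_left, Polynomial.eval_zero, Polynomial.eval_monomial, div_pow]
    field_simp
    ring
  · obtain ⟨r, hr⟩ : ∃ r, e = (j - (e + 1) : ℕ) + r := Nat.exists_eq_add_of_le (by omega)
    set k : ℕ := j - (e + 1)
    rw [Polynomial.eval_zero, Polynomial.eval_monomial, div_pow, show e - k = r by omega,
      show e + 1 = k + r + 1 by omega]
    field_simp
    ring

/-- The linear change of variables `(x, y, z) ↦ (c x - a z, c y - b z, z)`, which moves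
`(a, b, c)` to `(0, 0, c)`. -/
def vertexMatrix {R : Type*} [CommRing R] (v : Fin 3 → R) : Matrix (Fin 3) (Fin 3) R :=
  !![v 2, 0, -v 0; 0, v 2, -v 1; 0, 0, 1]

lemma vertexMatrix_mulVec {R : Type*} [CommRing R] (v w : Fin 3 → R) :
    (vertexMatrix v).mulVec w = ![v 2 * w 0 - v 0 * w 2, v 2 * w 1 - v 1 * w 2, w 2] := by
  ext i
  fin_cases i <;>
    simp [vertexMatrix, Matrix.mulVec, dotProduct, Fin.sum_univ_three, sub_eq_add_neg]

lemma det_vertexMatrix {R : Type*} [CommRing R] (v : Fin 3 → R) :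
    (vertexMatrix v).det = v 2 ^ 2 := by
  simp [vertexMatrix, Matrix.det_fin_three]
  ring

/-- A function of `n + 1` points of the plane which is nonzero when the points are in sufficiently
general position. -/
def genericity {R : Type*} [CommRing R] {n : ℕ} (e : ℕ) (p : Fin (n + 1) → Fin 3 → R) : R :=
  let x : Fin n → R := fun i => p 0 2 * p i.succ 0 - p 0 0 * p i.succ 2
  let y : Fin n → R := fun i => p 0 2 * p i.succ 1 - p 0 1 * p i.succ 2
  p 0 2 * (∏ i, y i) * (∏ i, ∏ j ∈ Finset.univ.erase i, (x i * y j - x j * y i)) *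
    (valueMatrix e x y fun i => p i.succ 2).det

lemma map_genericity {R S : Type*} [CommRing R] [CommRing S] {n : ℕ} (e : ℕ) (f : R →+* S)
    (p : Fin (n + 1) → Fin 3 → R) :
    f (genericity e p) = genericity e fun i j => f (p i j) := by
  simp only [genericity, map_mul, map_prod, map_sub, RingHom.map_det, valueMatrix_map]

lemma exists_genericity_ne_zero (n e : ℕ) :
    ∃ p : Fin (n + 1) → Fin 3 → ℂ, genericity e p ≠ 0 := by
  have hinj : Function.Injective fun i : Fin n => ((i : ℕ) : ℂ) :=
    Nat.cast_injective.comp Fin.val_injective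
  refine ⟨Fin.cons ![0, 0, 1] fun i => ![((i : ℕ) : ℂ), 1, ((i : ℕ) : ℂ) ^ (e + 1)], ?_⟩
  have hdet := Matrix.det_vandermonde_ne_zero_iff.2 hinj
  rw [← valueMatrix_eq_vandermonde e] at hdet
  have hprod : ∏ i : Fin n, ∏ j ∈ Finset.univ.erase i, (((i : ℕ) : ℂ) - ((j : ℕ) : ℂ)) ≠ 0 :=
    Finset.prod_ne_zero_iff.2 fun i _ => Finset.prod_ne_zero_iff.2 fun j hj =>
      sub_ne_zero.2 fun h => Finset.ne_of_mem_erase hj (hinj h).symm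
  simpa [genericity] using ⟨hprod, hdet⟩

lemma finrank_linSys_of_genericity_ne_zero {n e : ℕ} (hn : n ≤ 2 * (e + 1))
    {p : Fin (n + 1) → Fin 3 → ℂ} (h : genericity e p ≠ 0) :
    n + Module.finrank ℂ (linSys p (5 * n + e + 1) (qh n (5 * n + e))) = 2 * e + 3 := by
  obtain ⟨⟨⟨h2, hy⟩, hxy⟩, hdet⟩ := by
    simpa only [genericity, ne_eq, mul_eq_zero, not_or] using h
  replace hy := fun i => Finset.prod_ne_zero_iff.1 hy i (Finset.mem_univ i)
  replace hxy := fun i => Finset.prod_ne_zero_iff.1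
    (Finset.prod_ne_zero_iff.1 hxy i (Finset.mem_univ i))
  rw [← finrank_linSys_mulVec (A := vertexMatrix (p 0))
    (by rw [det_vertexMatrix]; exact (pow_ne_zero 2 h2).isUnit)]
  rw [show (fun i => (vertexMatrix (p 0)).mulVec (p i)) = _ from
    funext fun i => vertexMatrix_mulVec (p 0) (p i)]
  refine finrank_linSys_of_surjective ?_ ?_ ?_ hy ?_ (residualEval_surjective hn hy hdet)
  · simp [mul_comm]
  · simp [mul_comm]
  · simpa using h2
  · intro i j hij
    by_contra hne
    refine hxy i j (Finset.mem_erase.2 ⟨fun h => hne h.symm, Finset.mem_univ j⟩) ?_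
    simpa [sub_eq_zero] using (div_eq_div_iff (hy i) (hy j)).1 hij

end GeneralPosition

lemma virtDim_qh (k n : ℕ) : virtDim (k + 1) (qh n k) = 2 * (k + 1 : ℤ) - 21 * n := by
  have h : ((k + 1 : ℕ) : ℤ) * ((k + 1 : ℕ) + 3) = (k : ℤ) * (k + 1) + (2 * (k + 1)) * 2 := by
    push_cast
    ring
  rw [virtDim, Fin.sum_univ_succ, h, Int.add_mul_ediv_right _ _ two_ne_zero]
  simp [qh]
  ring

theorem special_L_d_dsub1_sixn (d n : ℕ) (hn : 1 ≤ n) (hd : 11 * n ≤ 2 * d) :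
    virtDim d (qh n (d - 1)) = 2 * (d : ℤ) - 21 * n ∧
    Generically (n + 1) (fun p =>
      projDim p d (qh n (d - 1)) = 2 * (d : ℤ) - 11 * n ∧
      projDim p d (qh n (d - 1)) > max (-1) (virtDim d (qh n (d - 1)))) := by
  obtain ⟨e, rfl⟩ : ∃ e, d = 5 * n + e + 1 := ⟨d - (5 * n + 1), by omega⟩
  have hv := virtDim_qh (5 * n + e) n
  rw [Nat.add_sub_cancel, hv]
  refine ⟨by push_cast; ring, genericity e fun i j => X (i, j), ?_, fun p _ hp => ?_⟩
  · obtain ⟨p, hp⟩ := exists_genericity_ne_zero n e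
    intro h
    have := congrArg (eval fun x : Fin (n + 1) × Fin 3 => p x.1 x.2) h
    rw [map_genericity] at this
    exact hp (by simpa using this)
  · rw [map_genericity] at hp
    have := finrank_linSys_of_genericity_ne_zero (e := e) (by omega) (p := p)
      (by simpa using hp)
    rw [projDim]
    push_cast
    omega
end

section
/- For general points, if 3d ≥ 15n + 1 and n ≥ 1, then ℓ(L(d, d−2, 6^n)) = 3d − 15n − 1. Since v(L(d, d−2, 6^n)) = 3d − 21n − 1, this system is special. -/
open MvPolynomial

/-- Polynomials whose partial derivatives of order `< m` vanish at `p`, defined recursively. -/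
noncomputable def vanishing (p : Fin 3 → ℂ) : ℕ → Submodule ℂ (MvPolynomial (Fin 3) ℂ)
  | 0 => ⊤
  | m + 1 => LinearMap.ker (aeval p).toLinearMap ⊓
      ⨅ i : Fin 3, (vanishing p m).comap (pderiv (R := ℂ) i).toLinearMap

lemma mem_vanishing_succ {p : Fin 3 → ℂ} {m : ℕ} {F : MvPolynomial (Fin 3) ℂ} :
    F ∈ vanishing p (m + 1) ↔ eval p F = 0 ∧ ∀ i, pderiv i F ∈ vanishing p m := by
  simp [vanishing]

lemma vanishing_succ_le (p : Fin 3 → ℂ) (m : ℕ) : vanishing p (m + 1) ≤ vanishing p m := by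
  induction m with
  | zero => intro F _; simp [vanishing]
  | succ m ih =>
    intro F hF
    rw [mem_vanishing_succ] at hF ⊢
    exact ⟨hF.1, fun i => ih (hF.2 i)⟩

lemma eval_eq_zero_of_mem_vanishing {p : Fin 3 → ℂ} {m : ℕ} (hm : 0 < m)
    {F : MvPolynomial (Fin 3) ℂ} (hF : F ∈ vanishing p m) : eval p F = 0 := by
  obtain ⟨k, rfl⟩ := Nat.exists_eq_succ_of_ne_zero hm.ne'
  exact (mem_vanishing_succ.1 hF).1

lemma pderiv_pow_mem_vanishing {p : Fin 3 → ℂ} (i : Fin 3) {m : ℕ} (k : ℕ)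
    {F : MvPolynomial (Fin 3) ℂ} (hF : F ∈ vanishing p (m + k)) :
    ((pderiv (R := ℂ) i).toLinearMap ^ k) F ∈ vanishing p m := by
  induction k generalizing F with
  | zero => simpa using hF
  | succ k ih =>
    rw [pow_succ, Module.End.mul_apply]
    exact ih ((mem_vanishing_succ.1 hF).2 i)

lemma pderiv_commute (i j : Fin 3) :
    Commute (pderiv (R := ℂ) i).toLinearMap (pderiv (R := ℂ) j).toLinearMap := by
  apply LinearMap.ext
  intro F
  ext m
  simp only [Module.End.mul_apply, Derivation.coeFn_coe,
    coeff_pderiv]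
  rcases eq_or_ne i j with rfl | h
  · rfl
  · rw [add_right_comm m]
    simp [h, h.symm]
    ring

lemma mderiv_pderiv (ν : Fin 3 → ℕ) (i : Fin 3) (F : MvPolynomial (Fin 3) ℂ) :
    mderiv ν (pderiv i F) = mderiv (ν + Pi.single i 1) F := by
  have h01 := fun a => (pderiv_commute 1 0).pow_left a
  have h02 := fun a => (pderiv_commute 2 0).pow_left a
  have h12 := fun a => (pderiv_commute 2 1).pow_left a
  have key : mderiv ν * (pderiv (R := ℂ) i).toLinearMap = mderiv (ν + Pi.single i 1) := by
    unfold mderiv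
    simp only [← Module.End.mul_eq_comp]
    fin_cases i
    · simp [pow_succ, mul_assoc, (h02 _).eq]
      rw [← mul_assoc (_ ^ ν 1), (h01 _).eq, mul_assoc]
    · simp [pow_succ, mul_assoc, (h12 _).eq]
    · simp [pow_succ, mul_assoc]
  exact DFunLike.congr_fun key F

lemma sum_add_single (ν : Fin 3 → ℕ) (i : Fin 3) :
    (ν + Pi.single i 1 : Fin 3 → ℕ) 0 + (ν + Pi.single i 1 : Fin 3 → ℕ) 1
        + (ν + Pi.single i 1 : Fin 3 → ℕ) 2
      = ν 0 + ν 1 + ν 2 + 1 := by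
  fin_cases i <;> simp <;> ring

lemma mem_vanishing_iff {p : Fin 3 → ℂ} {m : ℕ} {F : MvPolynomial (Fin 3) ℂ} :
    F ∈ vanishing p m ↔
      ∀ ν : Fin 3 → ℕ, ν 0 + ν 1 + ν 2 < m → eval p (mderiv ν F) = 0 := by
  constructor
  · intro hF ν hν
    refine eval_eq_zero_of_mem_vanishing (m := m - (ν 0 + ν 1 + ν 2)) (by omega) ?_
    refine pderiv_pow_mem_vanishing 0 (ν 0) (pderiv_pow_mem_vanishing 1 (ν 1)
      (pderiv_pow_mem_vanishing 2 (ν 2) ?_))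
    convert hF using 2
    omega
  · induction m generalizing F with
    | zero => intro _; simp [vanishing]
    | succ m ih =>
      intro h
      refine mem_vanishing_succ.2 ⟨by simpa [mderiv] using h 0 (by simp), fun i => ih ?_⟩
      intro ν hν
      rw [mderiv_pderiv]
      exact h _ (by rw [sum_add_single]; omega)

lemma mem_linSys_iff {k : ℕ} {p : Fin k → Fin 3 → ℂ} {d : ℕ} {m : Fin k → ℕ}
    {F : MvPolynomial (Fin 3) ℂ} :
    F ∈ linSys p d m ↔ F.IsHomogeneous d ∧ ∀ i, F ∈ vanishing (p i) (m i) := by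
  simp [linSys, mem_vanishing_iff]

lemma mul_mem_vanishing {p : Fin 3 → ℂ} {m : ℕ} {F : MvPolynomial (Fin 3) ℂ}
    (hF : F ∈ vanishing p m) (G : MvPolynomial (Fin 3) ℂ) : F * G ∈ vanishing p m := by
  induction m generalizing F G with
  | zero => simp [vanishing]
  | succ m ih =>
    have h := mem_vanishing_succ.1 hF
    refine mem_vanishing_succ.2 ⟨by simp [h.1], fun i => ?_⟩
    rw [pderiv_mul]
    exact add_mem (ih (h.2 i) _) (ih (vanishing_succ_le p m hF) _)

lemma mul_mem_vanishing_succ {p : Fin 3 → ℂ} {m : ℕ} {F L : MvPolynomial (Fin 3) ℂ}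
    (hF : F ∈ vanishing p m) (hL : eval p L = 0) : F * L ∈ vanishing p (m + 1) := by
  induction m generalizing F with
  | zero => exact mem_vanishing_succ.2 ⟨by simp [hL], fun i => by simp [vanishing]⟩
  | succ m ih =>
    have h := mem_vanishing_succ.1 hF
    refine mem_vanishing_succ.2 ⟨by simp [hL], fun i => ?_⟩
    rw [pderiv_mul]
    exact add_mem (ih (h.2 i)) (mul_mem_vanishing hF _)

lemma mul_pow_mem_vanishing {p : Fin 3 → ℂ} {m : ℕ} {F L : MvPolynomial (Fin 3) ℂ}
    (hF : F ∈ vanishing p m) (hL : eval p L = 0) (k : ℕ) :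
    F * L ^ k ∈ vanishing p (m + k) := by
  induction k with
  | zero => simpa using hF
  | succ k ih =>
    rw [pow_succ, ← mul_assoc]
    exact mul_mem_vanishing_succ ih hL

lemma mul_prod_pow_mem_vanishing {ι : Type*} {p : Fin 3 → ℂ} {m : ℕ}
    {F : MvPolynomial (Fin 3) ℂ} (hF : F ∈ vanishing p m) (L : ι → MvPolynomial (Fin 3) ℂ)
    (s : Finset ι) (hL : ∀ i ∈ s, eval p (L i) = 0) (k : ℕ) :
    F * (∏ i ∈ s, L i) ^ k ∈ vanishing p (m + s.card * k) := by
  classical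
  induction s using Finset.induction_on with
  | empty => simpa using hF
  | insert a s ha ih =>
    rw [Finset.prod_insert ha, Finset.card_insert_of_notMem ha, mul_comm (L a), mul_pow,
      ← mul_assoc, add_mul, one_mul, ← add_assoc]
    exact mul_pow_mem_vanishing (ih fun i hi => hL i (Finset.mem_insert_of_mem hi))
      (hL a (Finset.mem_insert_self a s)) k

/-- By Euler's identity, for a homogeneous polynomial of degree `d ≥ k` it suffices to check
the derivatives of order exactly `k` to obtain multiplicity `k + 1`. -/
lemma IsHomogeneous.mem_vanishing_succ {p : Fin 3 → ℂ} {d k : ℕ} (hk : k ≤ d)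
    {F : MvPolynomial (Fin 3) ℂ} (hF : F.IsHomogeneous d)
    (h : ∀ ν : Fin 3 → ℕ, ν 0 + ν 1 + ν 2 = k → eval p (mderiv ν F) = 0) :
    F ∈ vanishing p (k + 1) := by
  induction k generalizing d F with
  | zero =>
    exact _root_.mem_vanishing_succ.2
      ⟨by simpa [mderiv] using h 0 (by simp), fun i => by simp [vanishing]⟩
  | succ k ih =>
    have h1 (i : Fin 3) : pderiv i F ∈ vanishing p (k + 1) := by
      refine ih (d := d - 1) (by omega) hF.pderiv fun ν hν => ?_
      rw [mderiv_pderiv]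
      exact h _ (by rw [sum_add_single]; omega)
    refine _root_.mem_vanishing_succ.2 ⟨?_, h1⟩
    have h2 := congrArg (eval p) hF.sum_X_mul_pderiv
    rw [map_sum, Finset.sum_eq_zero fun i _ => by
      rw [map_mul, eval_eq_zero_of_mem_vanishing k.succ_pos (h1 i), mul_zero]] at h2
    simpa [show d ≠ 0 by omega] using h2.symm

instance finite_homogeneousSubmodule (d : ℕ) :
    Module.Finite ℂ (homogeneousSubmodule (Fin 3) ℂ d) :=
  Module.Finite.iff_fg.2 (homogeneousSubmodule_fg _ _ d)

instance finite_linSys {k : ℕ} (p : Fin k → Fin 3 → ℂ) (d : ℕ) (m : Fin k → ℕ) :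
    Module.Finite ℂ (linSys p d m) :=
  Submodule.finiteDimensional_of_le (S₂ := homogeneousSubmodule (Fin 3) ℂ d) inf_le_left

lemma mem_finsuppAntidiag_univ {d : ℕ} {s : Fin 3 →₀ ℕ} :
    s ∈ Finset.univ.finsuppAntidiag d ↔ s 0 + s 1 + s 2 = d := by
  simp [Finset.mem_finsuppAntidiag, Fin.sum_univ_three]

lemma choose_le_finrank_homogeneousSubmodule (d : ℕ) :
    (d + 2).choose 2 ≤ Module.finrank ℂ (homogeneousSubmodule (Fin 3) ℂ d) := by
  have hmem (s : (Finset.univ : Finset (Fin 3)).finsuppAntidiag d) :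
      monomial (s : Fin 3 →₀ ℕ) (1 : ℂ) ∈ homogeneousSubmodule (Fin 3) ℂ d := by
    refine isHomogeneous_monomial _ ?_
    rw [Finsupp.degree_eq_sum, Fin.sum_univ_three]
    exact mem_finsuppAntidiag_univ.1 s.2
  have hli : LinearIndependent ℂ
      (fun s => (⟨_, hmem s⟩ : homogeneousSubmodule (Fin 3) ℂ d)) := by
    refine LinearIndependent.of_comp (Submodule.subtype _) ?_
    have := (basisMonomials (Fin 3) ℂ).linearIndependent.comp _
      (Subtype.val_injective (p := (· ∈ (Finset.univ : Finset (Fin 3)).finsuppAntidiag d)))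
    simpa [Function.comp_def] using this
  have h := hli.fintype_card_le_finrank
  rw [Fintype.card_coe, Finset.card_finsuppAntidiag_nat_eq_choose] at h
  simpa [← Nat.choose_symm_add, add_comm] using h

lemma exists_finset_order_add_one (m : ℕ) :
    ∃ S : Finset (Fin 3 → ℕ), S.card ≤ (m + 1).choose 2 ∧
      ∀ ν : Fin 3 → ℕ, ν 0 + ν 1 + ν 2 + 1 = m → ν ∈ S := by
  classical
  rcases m with _ | k
  · exact ⟨∅, by simp⟩
  · refine ⟨(Finset.univ.finsuppAntidiag k).image (fun s : Fin 3 →₀ ℕ => ⇑s), Finset.card_image_le.trans ?_,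
      fun ν hν => ?_⟩
    · rw [Finset.card_finsuppAntidiag_nat_eq_choose, Finset.card_univ, Fintype.card_fin,
        show 3 + k - 1 = k + 2 by omega, Nat.choose_symm_add]
    · refine Finset.mem_image.2 ⟨Finsupp.equivFunOnFinite.symm ν, ?_, by simp⟩
      exact mem_finsuppAntidiag_univ.2 (by simpa using hν)

/-- The dimension of a linear system is at least its virtual dimension, for all points. -/
lemma choose_le_finrank_linSys_add {k : ℕ} (p : Fin k → Fin 3 → ℂ) (d : ℕ) (m : Fin k → ℕ)
    (hm : ∀ i, m i ≤ d + 1) :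
    (d + 2).choose 2 ≤ Module.finrank ℂ (linSys p d m) + ∑ i, (m i + 1).choose 2 := by
  choose S hS hmem using exists_finset_order_add_one
  let V := homogeneousSubmodule (Fin 3) ℂ d
  let T : V →ₗ[ℂ] ((Σ i, S (m i)) → ℂ) :=
    LinearMap.pi fun x => (aeval (p x.1)).toLinearMap ∘ₗ mderiv x.2 ∘ₗ V.subtype
  have hker : (LinearMap.ker T).map V.subtype ≤ linSys p d m := by
    rintro _ ⟨F, hF, rfl⟩
    refine mem_linSys_iff.2 ⟨F.2, fun i => ?_⟩
    rcases hmi : m i with _ | j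
    · simp [vanishing]
    · refine IsHomogeneous.mem_vanishing_succ (by have := hm i; omega) F.2 fun ν hν => ?_
      have := congrFun (LinearMap.mem_ker.1 hF) ⟨i, ν, hmem _ ν (by omega)⟩
      simpa [T] using this
  have h1 := Submodule.finrank_mono hker
  rw [Submodule.finrank_map_subtype_eq] at h1
  have h2 := T.finrank_range_add_finrank_ker
  have h3 : Module.finrank ℂ (LinearMap.range T) ≤ ∑ i, (m i + 1).choose 2 := by
    refine (Submodule.finrank_le _).trans ?_
    rw [Module.finrank_fintype_fun_eq_card, Fintype.card_sigma]
    exact Finset.sum_le_sum fun i _ => by simpa using hS (m i)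
  have h4 := choose_le_finrank_homogeneousSubmodule d
  change _ ≤ Module.finrank ℂ V at h4
  omega

lemma exists_line_through (p q : Fin 3 → ℂ) :
    ∃ L : MvPolynomial (Fin 3) ℂ, L ≠ 0 ∧ L.IsHomogeneous 1 ∧ eval p L = 0 ∧ eval q L = 0 := by
  obtain ⟨a, ha, ha0⟩ := Submodule.exists_mem_ne_zero_of_ne_bot
    (LinearMap.ker_ne_bot_of_finrank_lt (f := Matrix.mulVecLin !![p 0, p 1, p 2; q 0, q 1, q 2])
      (by simp))
  have h := LinearMap.mem_ker.1 ha
  have hp := congrFun h 0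
  have hq := congrFun h 1
  simp [Matrix.mulVec, dotProduct, Fin.sum_univ_three] at hp hq
  refine ⟨∑ i, C (a i) * X i, fun h0 => ha0 ?_, ?_, ?_, ?_⟩
  · ext j
    have := congrArg (coeff (Finsupp.single j 1)) h0
    simpa [coeff_sum, coeff_C_mul, coeff_X, Finsupp.single_left_inj] using this
  · exact IsHomogeneous.sum _ _ _ fun i _ => by
      simpa using (isHomogeneous_C _ (a i)).mul (isHomogeneous_X ℂ i)
  · simp [Fin.sum_univ_three]; linear_combination hp
  · simp [Fin.sum_univ_three]; linear_combination hq

/-- The lower bound for `L(d, d - 2, 6 ^ n)`: every curve of `L(d - 4n, d - 2 - 4n, 2 ^ n)` together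
with the lines through `p 0` and `p i`, taken four times each, belongs to the system. -/
lemma le_finrank_linSys (d n : ℕ) (hd : 5 * n + 1 ≤ d) (hn : 1 ≤ n)
    (p : Fin (n + 1) → Fin 3 → ℂ) :
    3 * d - 15 * n ≤ Module.finrank ℂ (linSys p d (qh n (d - 2))) := by
  choose L hL0 hLh hLp hLq using fun i : Fin n => exists_line_through (p 0) (p i.succ)
  obtain ⟨c, rfl⟩ : ∃ c, d = 4 * n + (c + 2) := ⟨d - 2 - 4 * n, by omega⟩
  let m : Fin (n + 1) → ℕ := Fin.cons c fun _ => 2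
  have hcount := choose_le_finrank_linSys_add p (c + 2) m
    (Fin.cases (by simp [m]; omega) fun i => by simp [m])
  set H := (∏ i, L i) ^ 4 with hH
  have hH0 : H ≠ 0 := pow_ne_zero _ (Finset.prod_ne_zero_iff.2 fun i _ => hL0 i)
  have hHh : H.IsHomogeneous (4 * n) := by
    have := (IsHomogeneous.prod Finset.univ L (fun _ => 1) fun i _ => hLh i).pow 4
    simpa [mul_comm] using this
  have hle : (linSys p (c + 2) m).map (LinearMap.mulRight ℂ H) ≤
      linSys p (4 * n + (c + 2)) (qh n (4 * n + (c + 2) - 2)) := by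
    rintro _ ⟨F, hF, rfl⟩
    obtain ⟨hF, hFv⟩ := mem_linSys_iff.1 hF
    refine mem_linSys_iff.2 ⟨by simpa [add_comm] using hF.mul hHh, Fin.cases ?_ fun i => ?_⟩
    · have := mul_prod_pow_mem_vanishing (hFv 0) L Finset.univ (fun i _ => hLp i) 4
      simp only [LinearMap.mulRight_apply]
      convert this using 2
      simp [qh, m]
      omega
    · have := mul_mem_vanishing (mul_pow_mem_vanishing (hFv i.succ) (hLq i) 4)
        ((∏ j ∈ Finset.univ.erase i, L j) ^ 4)
      rw [mul_assoc, ← mul_pow, Finset.mul_prod_erase _ _ (Finset.mem_univ i)] at this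
      simpa [qh, m] using this
  have h1 := Submodule.finrank_mono hle
  have hinj : Function.Injective (LinearMap.mulRight ℂ H) := mul_left_injective₀ hH0
  rw [← (Submodule.equivMapOfInjective _ hinj _).finrank_eq] at h1
  have hsum : ∑ i, (m i + 1).choose 2 = (c + 1).choose 2 + n * 3 := by
    simp [Fin.sum_univ_succ, m]
  have h4 : (c + 2 + 2).choose 2 = (c + 1).choose 2 + 3 * (c + 2) := by
    simp [Nat.choose_succ_succ]
    ring
  omega

/-- Functionals with common kernel of dimension at most `N` contain `finrank V - N` many
with a nonvanishing minor. -/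
lemma exists_det_ne_zero_of_finrank_iInf_ker_le {K V J : Type*} [Field K] [AddCommGroup V]
    [Module K V] [FiniteDimensional K V] (f : J → Module.Dual K V) {N : ℕ}
    (hN : Module.finrank K ↥(⨅ j, LinearMap.ker (f j)) ≤ N) :
    ∃ (r : ℕ) (a : Fin r → J) (v : Fin r → V), Module.finrank K V ≤ r + N ∧
      (Matrix.of fun i j => f (a i) (v j)).det ≠ 0 := by
  classical
  obtain ⟨κ, a, -, hspan, hli⟩ := exists_linearIndependent' K f
  have : Finite κ := hli.finite
  have : Fintype κ := Fintype.ofFinite κ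
  have hco (ι : Type _) (g : ι → Module.Dual K V) :
      (Submodule.span K (Set.range g)).dualCoannihilator = ⨅ j, LinearMap.ker (g j) := by
    ext x
    simp only [Submodule.mem_dualCoannihilator, Submodule.mem_iInf, LinearMap.mem_ker]
    refine ⟨fun h j => h _ (Submodule.subset_span ⟨j, rfl⟩), fun h φ hφ => ?_⟩
    induction hφ using Submodule.span_induction with
    | mem φ hφ => obtain ⟨j, rfl⟩ := hφ; exact h j
    | zero => rfl
    | add φ ψ _ _ h1 h2 => simp [h1, h2]
    | smul c φ _ h1 => simp [h1]
  have hdim := Subspace.finrank_add_finrank_dualCoannihilator_eq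
    (Submodule.span K (Set.range (f ∘ a)))
  rw [finrank_span_eq_card hli] at hdim
  let T : V →ₗ[K] (κ → K) := LinearMap.pi (f ∘ a)
  have hT : LinearMap.ker T =
      (Submodule.span K (Set.range (f ∘ a))).dualCoannihilator := by
    rw [hco]
    exact LinearMap.ker_pi _
  have hrank := T.finrank_range_add_finrank_ker
  have hsurj : Function.Surjective T := by
    rw [← LinearMap.range_eq_top]
    refine Submodule.eq_top_of_finrank_eq ?_
    rw [hT] at hrank
    rw [Module.finrank_fintype_fun_eq_card]
    omega
  let e := Fintype.equivFin κ
  choose w hw using hsurj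
  refine ⟨Fintype.card κ, a ∘ e.symm, fun j => w (Pi.single (e.symm j) 1), ?_, ?_⟩
  · rw [hspan, hco] at hdim
    omega
  · convert one_ne_zero (α := K)
    rw [← Matrix.det_one (n := Fin (Fintype.card κ))]
    congr 1
    ext i j
    have := congrFun (hw (Pi.single (e.symm j) 1)) (e.symm i)
    simpa [T, Matrix.one_apply, Pi.single_apply] using this

lemma add_finrank_le_of_det_ne_zero {K V : Type*} [Field K] [AddCommGroup V]
    [Module K V] [FiniteDimensional K V] {r : ℕ} (f : Fin r → Module.Dual K V) (v : Fin r → V)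
    (hdet : (Matrix.of fun i j => f i (v j)).det ≠ 0) :
    r + Module.finrank K ↥(⨅ i, LinearMap.ker (f i)) ≤ Module.finrank K V := by
  have hrank := (LinearMap.pi f).finrank_range_add_finrank_ker
  rw [LinearMap.ker_pi] at hrank
  have hli : LinearIndependent K fun j => LinearMap.pi f (v j) := by
    have := Matrix.linearIndependent_cols_of_det_ne_zero hdet
    exact this
  have h := (Submodule.finrank_mono (R := K) (Submodule.span_le.2
    (Set.range_subset_iff.2 fun j => LinearMap.mem_range_self (LinearMap.pi f) (v j))))
  rw [finrank_span_eq_card hli, Fintype.card_fin] at h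
  omega

/-- Upper semicontinuity of the dimension of a linear system. -/
lemma generically_finrank_linSys_le {k : ℕ} (d : ℕ) (m : Fin k → ℕ) (q : Fin k → Fin 3 → ℂ) :
    Generically k fun p =>
      Module.finrank ℂ (linSys p d m) ≤ Module.finrank ℂ (linSys q d m) := by
  let V := homogeneousSubmodule (Fin 3) ℂ d
  let J := {x : Fin k × (Fin 3 → ℕ) // x.2 0 + x.2 1 + x.2 2 < m x.1}
  let f (p : Fin k → Fin 3 → ℂ) (x : J) : Module.Dual ℂ V :=
    (aeval (p x.1.1)).toLinearMap ∘ₗ mderiv x.1.2 ∘ₗ V.subtype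
  have hf (p) : (⨅ x, LinearMap.ker (f p x)).map V.subtype = linSys p d m := by
    ext F
    simp only [Submodule.mem_map, Submodule.mem_iInf, mem_linSys_iff, mem_vanishing_iff]
    constructor
    · rintro ⟨F, hF, rfl⟩
      exact ⟨F.2, fun i ν hν => by simpa [f] using hF ⟨(i, ν), hν⟩⟩
    · rintro ⟨hF, h⟩
      exact ⟨⟨F, hF⟩, fun x => by simpa [f] using h x.1.1 x.1.2 x.2, rfl⟩
  have hfin (p) : Module.finrank ℂ ↥(⨅ x, LinearMap.ker (f p x)) =
      Module.finrank ℂ (linSys p d m) := by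
    rw [← hf, Submodule.finrank_map_subtype_eq]
  obtain ⟨r, a, v, hr, hdet⟩ := exists_det_ne_zero_of_finrank_iInf_ker_le (f q) (hfin q).le
  let P : MvPolynomial (Fin k × Fin 3) ℂ := (Matrix.of fun i j =>
    rename (fun s => ((a i).1.1, s)) (mderiv (a i).1.2 (v j).1)).det
  have hP (p : Fin k → Fin 3 → ℂ) : eval (fun x => p x.1 x.2) P =
      (Matrix.of fun i j => f p (a i) (v j)).det := by
    rw [RingHom.map_det]
    congr 1
    ext i j
    simp [f, eval_rename, Function.comp_def]
  refine ⟨P, fun h => hdet (by rw [← hP, h, map_zero]), fun p _ hp => ?_⟩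
  rw [hP] at hp
  have h1 := add_finrank_le_of_det_ne_zero _ _ hp
  have h2 : Module.finrank ℂ ↥(⨅ x, LinearMap.ker (f p x)) ≤
      Module.finrank ℂ ↥(⨅ i, LinearMap.ker (f p (a i))) :=
    Submodule.finrank_mono (le_iInf fun i => iInf_le _ (a i))
  rw [hfin] at h2
  omega

/-- Dehomogenization `F ↦ F(1, t, z)`, as a polynomial in `z` over `ℂ[t]`. -/
noncomputable def dehom : MvPolynomial (Fin 3) ℂ →ₐ[ℂ] Polynomial (Polynomial ℂ) :=
  aeval ![1, Polynomial.C Polynomial.X, Polynomial.X]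

lemma coeff_coeff_dehom (F : MvPolynomial (Fin 3) ℂ) (j k : ℕ) :
    ((dehom F).coeff k).coeff j =
      ∑ s ∈ F.support, if s 1 = j ∧ s 2 = k then coeff s F else 0 := by
  rw [dehom, aeval_def, eval₂_eq', Polynomial.finsetSum_coeff, Polynomial.finsetSum_coeff]
  refine Finset.sum_congr rfl fun s _ => ?_
  simp only [Fin.prod_univ_three, Matrix.cons_val_zero, Matrix.cons_val_one, Matrix.cons_val,
    one_pow, one_mul, ← Polynomial.C_pow, Polynomial.algebraMap_apply]
  rw [← mul_assoc, ← Polynomial.C_mul, Polynomial.coeff_C_mul_X_pow]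
  by_cases h : s 2 = k
  · subst h
    simp [Polynomial.coeff_X_pow, eq_comm]
  · simp [h, Ne.symm h]

lemma sum_eq_of_coeff_ne_zero {F : MvPolynomial (Fin 3) ℂ} {d : ℕ} (hF : F.IsHomogeneous d)
    {s : Fin 3 →₀ ℕ} (hs : coeff s F ≠ 0) : s 0 + s 1 + s 2 = d := by
  by_contra h
  refine hs (hF.coeff_eq_zero ?_)
  rwa [Finsupp.degree_eq_sum, Fin.sum_univ_three]

lemma coeff_coeff_dehom_of_isHomogeneous {F : MvPolynomial (Fin 3) ℂ} {d : ℕ}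
    (hF : F.IsHomogeneous d) (s : Fin 3 →₀ ℕ) (hs : s 0 + s 1 + s 2 = d) :
    ((dehom F).coeff (s 2)).coeff (s 1) = coeff s F := by
  rw [coeff_coeff_dehom, Finset.sum_eq_single s]
  · simp
  · intro t ht hts
    rw [if_neg]
    rintro ⟨h1, h2⟩
    refine hts (Finsupp.ext fun i => ?_)
    have := sum_eq_of_coeff_ne_zero hF (mem_support_iff.1 ht)
    fin_cases i
    · change t 0 = s 0
      omega
    · exact h1
    · exact h2
  · intro h
    simpa using h

lemma coeff_coeff_dehom_of_lt {F : MvPolynomial (Fin 3) ℂ} {d j k : ℕ}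
    (hF : F.IsHomogeneous d) (h : d < j + k) : ((dehom F).coeff k).coeff j = 0 := by
  rw [coeff_coeff_dehom]
  refine Finset.sum_eq_zero fun t ht => if_neg ?_
  have := sum_eq_of_coeff_ne_zero hF (mem_support_iff.1 ht)
  omega

lemma eq_zero_of_dehom_eq_zero {F : MvPolynomial (Fin 3) ℂ} {d : ℕ}
    (hF : F.IsHomogeneous d) (h : dehom F = 0) : F = 0 := by
  ext s
  by_cases hs : s 0 + s 1 + s 2 = d
  · rw [← coeff_coeff_dehom_of_isHomogeneous hF s hs, h]
    simp
  · rw [coeff_zero]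
    by_contra h'
    exact hs (sum_eq_of_coeff_ne_zero hF h')

lemma natDegree_coeff_dehom_le {F : MvPolynomial (Fin 3) ℂ} {d : ℕ}
    (hF : F.IsHomogeneous d) (k : ℕ) : ((dehom F).coeff k).natDegree ≤ d - k :=
  Polynomial.natDegree_le_iff_coeff_eq_zero.2 fun _ hj =>
    coeff_coeff_dehom_of_lt hF (by omega)

lemma derivative_dehom (F : MvPolynomial (Fin 3) ℂ) :
    Polynomial.derivative (dehom F) = dehom (pderiv 2 F) := by
  induction F using MvPolynomial.induction_on with
  | C a => simp [dehom, Polynomial.algebraMap_apply]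
  | add F G h1 h2 => simp [h1, h2]
  | mul_X F i h =>
    have hX : Polynomial.derivative (dehom (X i)) = dehom (pderiv 2 (X i)) := by
      fin_cases i <;> simp [dehom, pderiv_X]
    rw [map_mul, Polynomial.derivative_mul, h, hX, pderiv_mul, map_add, map_mul, map_mul]

lemma derivative_eval_dehom (F : MvPolynomial (Fin 3) ℂ) (c : ℂ) :
    Polynomial.derivative ((dehom F).eval (Polynomial.C c)) =
      (dehom (pderiv 1 F)).eval (Polynomial.C c) := by
  induction F using MvPolynomial.induction_on with
  | C a => simp [dehom, Polynomial.algebraMap_apply]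
  | add F G h1 h2 => simp [h1, h2]
  | mul_X F i h =>
    have hX : Polynomial.derivative ((dehom (X i)).eval (Polynomial.C c)) =
        (dehom (pderiv 1 (X i))).eval (Polynomial.C c) := by
      fin_cases i <;> simp [dehom, pderiv_X]
    rw [map_mul, Polynomial.eval_mul, Polynomial.derivative_mul, h, hX, pderiv_mul, map_add,
      map_mul, map_mul, Polynomial.eval_add, Polynomial.eval_mul, Polynomial.eval_mul]

lemma eval_eval_dehom (F : MvPolynomial (Fin 3) ℂ) (t c : ℂ) :
    ((dehom F).eval (Polynomial.C c)).eval t = eval ![1, t, c] F := by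
  induction F using MvPolynomial.induction_on with
  | C a => simp [dehom, Polynomial.algebraMap_apply]
  | add F G h1 h2 => simp [h1, h2]
  | mul_X F i h =>
    rw [map_mul, Polynomial.eval_mul, Polynomial.eval_mul, h, map_mul]
    congr 1
    fin_cases i <;> simp [dehom]

lemma X_sub_C_pow_dvd_eval_dehom {t c : ℂ} {m : ℕ} {F : MvPolynomial (Fin 3) ℂ}
    (hF : F ∈ vanishing ![1, t, c] m) :
    (Polynomial.X - Polynomial.C t) ^ m ∣ (dehom F).eval (Polynomial.C c) := by
  by_cases h0 : (dehom F).eval (Polynomial.C c) = 0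
  · simp [h0]
  rcases m with _ | m
  · simp
  rw [← Polynomial.le_rootMultiplicity_iff h0, Nat.succ_le_iff,
    Polynomial.lt_rootMultiplicity_iff_isRoot_iterate_derivative h0]
  clear h0
  intro k hk
  induction k generalizing F m with
  | zero =>
    rw [Function.iterate_zero_apply, Polynomial.IsRoot.def, eval_eval_dehom]
    exact (mem_vanishing_succ.1 hF).1
  | succ k ih =>
    obtain ⟨m, rfl⟩ : ∃ m', m = m' + 1 := ⟨m - 1, by omega⟩
    rw [Function.iterate_succ_apply, derivative_eval_dehom]
    exact ih m ((mem_vanishing_succ.1 hF).2 1) (by omega)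

lemma coeff_eq_zero_of_mem_vanishing {F : MvPolynomial (Fin 3) ℂ} {d m : ℕ}
    (hF : F.IsHomogeneous d) (hv : F ∈ vanishing ![0, 0, 1] m) (s : Fin 3 →₀ ℕ)
    (hs : s 0 + s 1 < m) : coeff s F = 0 := by
  induction m generalizing F d s with
  | zero => omega
  | succ m ih =>
    obtain ⟨h0, h1⟩ := mem_vanishing_succ.1 hv
    have step (i : Fin 3) (hi : s i ≠ 0)
        (h : (s - Finsupp.single i 1 : Fin 3 →₀ ℕ) 0 + (s - Finsupp.single i 1 : Fin 3 →₀ ℕ) 1 < m) :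
        coeff s F = 0 := by
      have h' := ih hF.pderiv (h1 i) _ h
      rw [coeff_pderiv, tsub_add_cancel_of_le
        (by simpa [Nat.one_le_iff_ne_zero] using hi)] at h'
      exact (mul_eq_zero.1 h').resolve_right (Nat.cast_add_one_ne_zero _)
    by_cases hs0 : s 0 = 0
    · by_cases hs1 : s 1 = 0
      · by_contra hne
        have hsd := sum_eq_of_coeff_ne_zero hF hne
        rw [eval_eq', Finset.sum_eq_single s] at h0
        · exact hne (by simpa [Fin.prod_univ_three, hs0, hs1] using h0)
        · intro t ht hts
          have htd := sum_eq_of_coeff_ne_zero hF (mem_support_iff.1 ht)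
          have : t 0 ≠ 0 ∨ t 1 ≠ 0 := by
            by_contra! h
            refine hts (Finsupp.ext fun i => ?_)
            fin_cases i
            · exact h.1.trans hs0.symm
            · exact h.2.trans hs1.symm
            · change t 2 = s 2
              omega
          rcases this with h | h <;> simp [Fin.prod_univ_three, h]
        · intro h
          simp [notMem_support_iff.1 h]
      · refine step 1 hs1 ?_
        simp
        omega
    · refine step 0 hs0 ?_
      simp
      omega

lemma X_pow_sub_one_pow_dvd {n : ℕ} (hn : 0 < n) {ζ : ℂ} (hζ : IsPrimitiveRoot ζ n) {k : ℕ}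
    {H : Polynomial ℂ}
    (h : ∀ i : Fin n, (Polynomial.X - Polynomial.C (ζ ^ (i : ℕ))) ^ k ∣ H) :
    (Polynomial.X ^ n - 1 : Polynomial ℂ) ^ k ∣ H := by
  rw [Polynomial.X_pow_sub_one_eq_prod hn hζ, ← Finset.prod_pow]
  refine Finset.prod_dvd_of_coprime (fun a _ b _ hab => ?_) fun a ha => ?_
  · exact (Polynomial.isCoprime_X_sub_C_of_isUnit_sub (sub_ne_zero.2 hab).isUnit).pow
  · have : NeZero n := ⟨hn.ne'⟩
    obtain ⟨i, hi, rfl⟩ :=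
      hζ.eq_pow_of_pow_eq_one ((Polynomial.mem_nthRootsFinset hn 1).1 ha)
    exact h ⟨i, hi⟩

lemma mem_degreeLT_of_natDegree_mul_le {R M : Polynomial ℂ} {D N k : ℕ} (hM : M.Monic)
    (hD : M.natDegree = D) (h : (R * M).natDegree ≤ N) (hk : N + 1 ≤ k + D) :
    R ∈ Polynomial.degreeLT ℂ k := by
  rcases eq_or_ne R 0 with rfl | h0
  · exact zero_mem _
  · rw [Polynomial.natDegree_mul h0 hM.ne_zero, hD] at h
    rw [Polynomial.mem_degreeLT, Polynomial.degree_eq_natDegree h0]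
    exact_mod_cast (by omega : R.natDegree < k)

lemma natDegree_mul_le_of_mem_degreeLT {R M : Polynomial ℂ} {k N : ℕ}
    (hR : R ∈ Polynomial.degreeLT ℂ k) (h : k + M.natDegree ≤ N + 1) :
    (R * M).natDegree ≤ N := by
  rcases eq_or_ne R 0 with rfl | h0
  · simp
  · rw [Polynomial.mem_degreeLT, Polynomial.degree_eq_natDegree h0] at hR
    have : R.natDegree < k := by exact_mod_cast hR
    exact Polynomial.natDegree_mul_le.trans (by omega)

/-- Quadratic polynomials over `ℂ[t]` with prescribed vanishing along the points
`(ζ ^ i, ζ ^ (i * e))` are quadratic forms in `z - t ^ e` and `t ^ (n - e) z - 1`. -/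
lemma exists_quadratic_form {d n e : ℕ} (he : e = (n + 1) / 2) (hn : 1 ≤ n) (hd : 5 * n + 1 ≤ d)
    {A B D G q s : Polynomial ℂ} (hq : q = Polynomial.X ^ e) (hs : s = Polynomial.X ^ (n - e))
    (hG : G = Polynomial.X ^ n - 1)
    (hA : A.natDegree ≤ d - 2) (hB : B.natDegree ≤ d - 1) (hD : D.natDegree ≤ d)
    (h4 : G ^ 4 ∣ A) (h5 : G ^ 5 ∣ 2 * A * q + B) (h6 : G ^ 6 ∣ A * q ^ 2 + B * q + D) :
    ∃ P ∈ Polynomial.degreeLT ℂ (d + 1 - 4 * n - 2 * e), ∃ Q ∈ Polynomial.degreeLT ℂ (d - 5 * n),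
      ∃ R ∈ Polynomial.degreeLT ℂ (d + 2 * e - 6 * n - 1),
        A = G ^ 4 * (P + Q * s + R * s ^ 2) ∧
        B = G ^ 4 * (-2 * P * q - Q * (1 + q * s) - 2 * R * s) ∧
        D = G ^ 4 * (P * q ^ 2 + Q * q + R) := by
  obtain ⟨a, ha⟩ := h4
  obtain ⟨b, hb⟩ := h5
  obtain ⟨c, hc⟩ := h6
  have hqs : q * s = G + 1 := by
    rw [hq, hs, hG, ← pow_add, Nat.add_sub_cancel' (by omega)]
    ring
  have hGm : G.Monic := hG ▸ Polynomial.monic_X_pow_sub_C 1 (by omega)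
  have hGd : G.natDegree = n := hG ▸ Polynomial.natDegree_X_pow_sub_C
  have hGk (k : ℕ) : (G ^ k).natDegree = k * n := by rw [hGm.natDegree_pow, hGd]
  have hqd : q.natDegree = e := by simp [hq]
  have hsd : s.natDegree = n - e := by simp [hs]
  have hB' : B = G ^ 5 * b - 2 * A * q := by linear_combination hb
  have hD' : D = G ^ 6 * c - B * q - A * q ^ 2 := by linear_combination hc
  set P := a - b * s + c * s ^ 2 with hP
  set Q := b - 2 * s * c with hQ
  have hDegP : P ∈ Polynomial.degreeLT ℂ (d + 1 - 4 * n - 2 * e) := by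
    refine mem_degreeLT_of_natDegree_mul_le (hGm.pow 6) (hGk 6) (N := d + 2 * (n - e)) ?_ (by omega)
    have : P * G ^ 6 = A + B * s + D * s ^ 2 := by
      have h1 : q * s - 1 = G := by rw [hqs]; ring
      rw [hD', hB', ha, hP, ← h1]
      ring
    rw [this]
    refine (Polynomial.natDegree_add_le_of_degree_le (Polynomial.natDegree_add_le_of_degree_le
      (hA.trans (by omega)) (Polynomial.natDegree_mul_le.trans (by omega)))
      (Polynomial.natDegree_mul_le.trans ?_))
    rw [hs, ← pow_mul, Polynomial.natDegree_X_pow]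
    omega
  have hDegR : c ∈ Polynomial.degreeLT ℂ (d + 2 * e - 6 * n - 1) := by
    refine mem_degreeLT_of_natDegree_mul_le (hGm.pow 6) (hGk 6) (N := d - 2 + 2 * e) ?_ (by omega)
    rw [mul_comm, ← hc]
    refine (Polynomial.natDegree_add_le_of_degree_le (Polynomial.natDegree_add_le_of_degree_le
      (Polynomial.natDegree_mul_le.trans ?_) (Polynomial.natDegree_mul_le.trans (by omega)))
      (hD.trans (by omega)))
    rw [hq, ← pow_mul, Polynomial.natDegree_X_pow]
    omega
  have hBeq : B = G ^ 4 * (-2 * P * q - Q * (1 + q * s) - 2 * c * s) := by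
    rw [hB', ha, hP, hQ]
    linear_combination (-G ^ 4 * b) * hqs
  have hDegQ : Q ∈ Polynomial.degreeLT ℂ (d - 5 * n) := by
    have hm : (1 + q * s).Monic := by
      rw [hq, hs, ← pow_add, Nat.add_sub_cancel' (by omega), add_comm]
      exact Polynomial.monic_X_pow_add_C 1 (by omega)
    have hmd : (1 + q * s).natDegree = n := by
      rw [hq, hs, ← pow_add, Nat.add_sub_cancel' (by omega), add_comm]
      exact Polynomial.natDegree_X_pow_add_C
    refine mem_degreeLT_of_natDegree_mul_le (hm.mul (hGm.pow 4)) (D := 5 * n) (N := d - 1) ?_ ?_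
      (by omega)
    · rw [hm.natDegree_mul (hGm.pow 4), hmd, hGk]
      ring
    have h2 : (2 : Polynomial ℂ).natDegree = 0 := Polynomial.natDegree_ofNat 2
    have : Q * ((1 + q * s) * G ^ 4) = -B - P * (2 * q * G ^ 4) - c * (2 * s * G ^ 4) := by
      linear_combination hBeq
    rw [this]
    refine (Polynomial.natDegree_sub_le_of_le (Polynomial.natDegree_sub_le_of_le
      (m := d - 1) (n := d - 1) ((Polynomial.natDegree_neg B).trans_le hB)
        (natDegree_mul_le_of_mem_degreeLT hDegP ?_)) (n := d - 1)
      (natDegree_mul_le_of_mem_degreeLT hDegR ?_)).trans (by simp)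
    · have : (2 * q * G ^ 4).natDegree ≤ 0 + e + 4 * n :=
        Polynomial.natDegree_mul_le_of_le (Polynomial.natDegree_mul_le_of_le h2.le hqd.le) (hGk 4).le
      omega
    · have : (2 * s * G ^ 4).natDegree ≤ 0 + (n - e) + 4 * n :=
        Polynomial.natDegree_mul_le_of_le (Polynomial.natDegree_mul_le_of_le h2.le hsd.le) (hGk 4).le
      omega
  refine ⟨P, hDegP, Q, hDegQ, c, hDegR, ?_, hBeq, ?_⟩
  · rw [ha, hP, hQ]
    ring
  · rw [hD', hB', ha, hP, hQ]
    linear_combination G ^ 4 * (b * q - c * (G + q * s - 1)) * hqs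

/-- The special configuration `p 0 = (0, 0, 1)`, `p i = (1, ζ ^ i, ζ ^ (i * e))`. -/
noncomputable def rootsConfiguration (ζ : ℂ) (n e : ℕ) : Fin (n + 1) → Fin 3 → ℂ :=
  Fin.cons ![0, 0, 1] fun i => ![1, ζ ^ (i : ℕ), (ζ ^ (i : ℕ)) ^ e]

lemma exists_dehom_eq {d n e : ℕ} (he : e = (n + 1) / 2) (hn : 1 ≤ n) (hd : 5 * n + 1 ≤ d)
    {ζ : ℂ} (hζ : IsPrimitiveRoot ζ n) {F : MvPolynomial (Fin 3) ℂ}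
    (hF : F ∈ linSys (rootsConfiguration ζ n e) d (qh n (d - 2))) :
    ∃ P ∈ Polynomial.degreeLT ℂ (d + 1 - 4 * n - 2 * e), ∃ Q ∈ Polynomial.degreeLT ℂ (d - 5 * n),
      ∃ R ∈ Polynomial.degreeLT ℂ (d + 2 * e - 6 * n - 1),
        dehom F = Polynomial.C ((Polynomial.X ^ n - 1) ^ 4) *
          (Polynomial.C P * (Polynomial.X - Polynomial.C (Polynomial.X ^ e)) ^ 2 +
          Polynomial.C Q * ((Polynomial.X - Polynomial.C (Polynomial.X ^ e)) *
            (Polynomial.C (Polynomial.X ^ (n - e)) * Polynomial.X - 1)) +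
          Polynomial.C R * (Polynomial.C (Polynomial.X ^ (n - e)) * Polynomial.X - 1) ^ 2) := by
  obtain ⟨hFh, hFv⟩ := mem_linSys_iff.1 hF
  have hv0 : F ∈ vanishing ![0, 0, 1] (d - 2) := hFv 0
  have hv (i : Fin n) : F ∈ vanishing ![1, ζ ^ (i : ℕ), (ζ ^ (i : ℕ)) ^ e] 6 := hFv i.succ
  set A := (dehom F).coeff 2 with hA
  set B := (dehom F).coeff 1 with hB
  set D := (dehom F).coeff 0 with hD
  have hdeg : (dehom F).natDegree < 3 := by
    rw [Nat.lt_succ_iff, Polynomial.natDegree_le_iff_coeff_eq_zero]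
    intro k hk
    ext j
    rcases lt_or_ge d (j + k) with h | h
    · simpa using coeff_coeff_dehom_of_lt hFh h
    · have h1 := coeff_coeff_dehom_of_isHomogeneous hFh
        (Finsupp.equivFunOnFinite.symm ![d - j - k, j, k]) (by simp; omega)
      rw [coeff_eq_zero_of_mem_vanishing hFh hv0 _ (by simp; omega)] at h1
      simpa using h1
  have hf : dehom F = Polynomial.C A * Polynomial.X ^ 2 + Polynomial.C B * Polynomial.X +
      Polynomial.C D := by
    conv_lhs => rw [(dehom F).as_sum_range_C_mul_X_pow' hdeg]
    simp [Finset.sum_range_succ, hA, hB, hD]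
    ring
  have hf1 : dehom (pderiv 2 F) = 2 * Polynomial.C A * Polynomial.X + Polynomial.C B := by
    rw [← derivative_dehom, hf]
    simp
    ring
  have hf2 : dehom (pderiv 2 (pderiv 2 F)) = Polynomial.C (2 * A) := by
    rw [← derivative_dehom, hf1]
    simp
    exact Or.inl (map_ofNat Polynomial.C 2).symm
  have hqi (i : Fin n) : Polynomial.X - Polynomial.C (ζ ^ (i : ℕ)) ∣
      Polynomial.X ^ e - Polynomial.C ((ζ ^ (i : ℕ)) ^ e) := by
    rw [Polynomial.C_pow (a := ζ ^ (i : ℕ)) (n := e)]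
    exact sub_dvd_pow_sub_pow (Polynomial.X : Polynomial ℂ) (Polynomial.C (ζ ^ (i : ℕ))) e
  have hl4 (i : Fin n) : (Polynomial.X - Polynomial.C (ζ ^ (i : ℕ))) ^ 4 ∣ A := by
    have := X_sub_C_pow_dvd_eval_dehom
      ((mem_vanishing_succ (m := 4).1 ((mem_vanishing_succ (m := 5).1 (hv i)).2 2)).2 2)
    rw [hf2, Polynomial.eval_C] at this
    have h := this.mul_left (Polynomial.C (1 / 2))
    rwa [← mul_assoc, ← map_ofNat Polynomial.C 2, ← Polynomial.C_mul,
      one_div_mul_cancel two_ne_zero, Polynomial.C_1, one_mul] at h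
  have hl5 (i : Fin n) : (Polynomial.X - Polynomial.C (ζ ^ (i : ℕ))) ^ 5 ∣
      2 * A * Polynomial.X ^ e + B := by
    have := X_sub_C_pow_dvd_eval_dehom ((mem_vanishing_succ (m := 5).1 (hv i)).2 2)
    rw [hf1] at this
    simp only [Polynomial.eval_add, Polynomial.eval_mul, Polynomial.eval_C, Polynomial.eval_X,
      Polynomial.eval_ofNat] at this
    have h := (mul_dvd_mul (hl4 i) (hqi i)).mul_left 2
    rw [← pow_succ] at h
    convert this.add h using 1
    ring
  have hl6 (i : Fin n) : (Polynomial.X - Polynomial.C (ζ ^ (i : ℕ))) ^ 6 ∣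
      A * (Polynomial.X ^ e) ^ 2 + B * Polynomial.X ^ e + D := by
    have := X_sub_C_pow_dvd_eval_dehom (hv i)
    rw [hf] at this
    simp only [Polynomial.eval_add, Polynomial.eval_mul, Polynomial.eval_C, Polynomial.eval_X,
      Polynomial.eval_pow] at this
    have h5 := mul_dvd_mul (hl5 i) (hqi i)
    have h4 := mul_dvd_mul (hl4 i) (pow_dvd_pow_of_dvd (hqi i) 2)
    rw [← pow_succ] at h5
    rw [← pow_add] at h4
    convert (this.add h5).sub h4 using 1
    ring
  obtain ⟨P, hP, Q, hQ, R, hR, h1, h2, h3⟩ := exists_quadratic_form he hn hd rfl rfl rfl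
    (natDegree_coeff_dehom_le hFh 2) (natDegree_coeff_dehom_le hFh 1)
    (natDegree_coeff_dehom_le hFh 0)
    (X_pow_sub_one_pow_dvd hn hζ hl4) (X_pow_sub_one_pow_dvd hn hζ hl5)
    (X_pow_sub_one_pow_dvd hn hζ hl6)
  refine ⟨P, hP, Q, hQ, R, hR, ?_⟩
  rw [hf, hA, hB, hD, h1, h2, h3]
  simp only [map_mul, map_add, map_sub, map_neg, map_pow, map_one, map_ofNat]
  ring

lemma finrank_linSys_rootsConfiguration_le {d n e : ℕ} (he : e = (n + 1) / 2) (hn : 1 ≤ n)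
    (hd : 5 * n + 1 ≤ d) {ζ : ℂ} (hζ : IsPrimitiveRoot ζ n) :
    Module.finrank ℂ (linSys (rootsConfiguration ζ n e) d (qh n (d - 2))) ≤ 3 * d - 15 * n := by
  let W := Polynomial.degreeLT ℂ (d + 1 - 4 * n - 2 * e) × Polynomial.degreeLT ℂ (d - 5 * n) ×
    Polynomial.degreeLT ℂ (d + 2 * e - 6 * n - 1)
  let u : Polynomial (Polynomial ℂ) := Polynomial.X - Polynomial.C (Polynomial.X ^ e)
  let w : Polynomial (Polynomial ℂ) := Polynomial.C (Polynomial.X ^ (n - e)) * Polynomial.X - 1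
  let g : Polynomial (Polynomial ℂ) := Polynomial.C ((Polynomial.X ^ n - 1) ^ 4)
  let T (k : ℕ) (v : Polynomial (Polynomial ℂ)) :
      Polynomial.degreeLT ℂ k →ₗ[ℂ] Polynomial (Polynomial ℂ) :=
    LinearMap.mulRight ℂ v ∘ₗ
      (Polynomial.CAlgHom (R := ℂ) (A := Polynomial ℂ)).toLinearMap ∘ₗ Submodule.subtype _
  let Ψ : W →ₗ[ℂ] Polynomial (Polynomial ℂ) := LinearMap.mulLeft ℂ g ∘ₗ
    (T _ (u ^ 2)).coprod ((T _ (u * w)).coprod (T _ (w ^ 2)))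
  have hW : Module.finrank ℂ W ≤ 3 * d - 15 * n := by
    have h (k : ℕ) : Module.finrank ℂ (Polynomial.degreeLT ℂ k) = k := by
      rw [(Polynomial.degreeLTEquiv ℂ k).finrank_eq, Module.finrank_fin_fun]
    rw [Module.finrank_prod, Module.finrank_prod, h, h, h]
    omega
  have hmem (F : linSys (rootsConfiguration ζ n e) d (qh n (d - 2))) :
      dehom.toLinearMap F.1 ∈ LinearMap.range Ψ := by
    obtain ⟨P, hP, Q, hQ, R, hR, h⟩ := exists_dehom_eq he hn hd hζ F.2
    refine ⟨(⟨P, hP⟩, ⟨Q, hQ⟩, ⟨R, hR⟩), ?_⟩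
    rw [AlgHom.toLinearMap_apply, h, add_assoc]
    rfl
  have hinj : Function.Injective ((dehom.toLinearMap ∘ₗ Submodule.subtype _).codRestrict _ hmem) := by
    rw [injective_iff_map_eq_zero]
    intro F hF0
    exact Subtype.ext (eq_zero_of_dehom_eq_zero (mem_linSys_iff.1 F.2).1 (congrArg Subtype.val hF0))
  exact (LinearMap.finrank_le_finrank_of_injective hinj).trans
    ((LinearMap.finrank_range_le Ψ).trans hW)

theorem special_L_d_dsub2_sixn (d n : ℕ) (hn : 1 ≤ n) (hd : 15 * n + 1 ≤ 3 * d) :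
    virtDim d (qh n (d - 2)) = 3 * (d : ℤ) - 21 * n - 1 ∧
    Generically (n + 1) (fun p =>
      projDim p d (qh n (d - 2)) = 3 * (d : ℤ) - 15 * n - 1 ∧
      projDim p d (qh n (d - 2)) > max (-1) (virtDim d (qh n (d - 2)))) := by
  have hvirt : virtDim d (qh n (d - 2)) = 3 * (d : ℤ) - 21 * n - 1 := by
    obtain ⟨c, rfl⟩ : ∃ c, d = c + 2 := ⟨d - 2, by omega⟩
    have h : ((c + 2 : ℕ) : ℤ) * ((c + 2 : ℕ) + 3) = c * (c + 1) + (3 * c + 5) * 2 := by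
      push_cast
      ring
    rw [virtDim, h, Int.add_mul_ediv_right _ _ two_ne_zero, Fin.sum_univ_succ]
    simp [qh]
    ring
  refine ⟨hvirt, ?_⟩
  have hd' : 5 * n + 1 ≤ d := by omega
  obtain ⟨P, hP0, hP⟩ := generically_finrank_linSys_le d (qh n (d - 2))
    (rootsConfiguration (Complex.exp (2 * Real.pi * Complex.I / n)) n ((n + 1) / 2))
  refine ⟨P, hP0, fun p hp hpP => ?_⟩
  have h1 := (hP p hp hpP).trans (finrank_linSys_rootsConfiguration_le rfl hn hd'
    (Complex.isPrimitiveRoot_exp n (by omega)))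
  have h2 := le_finrank_linSys d n hd' hn p
  have h3 : projDim p d (qh n (d - 2)) = 3 * (d : ℤ) - 15 * n - 1 := by
    rw [projDim]
    omega
  refine ⟨h3, ?_⟩
  rw [h3, hvirt, gt_iff_lt, max_lt_iff]
  constructor <;> omega
end
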